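/- arXiv:1403.4685 — 4 statements merged into one kernel-verified Lean document; each statement's English description precedes it below -/
import Mathlib

section
/- Let p be a prime, F a field of characteristic p, and r, s positive integers. Suppose the Kronecker product J_r ⊗ J_s is similar over F to the block-diagonal matrix with diagonal blocks J_{λ_1},…,J_{λ_b}, where λ_1 ≥ ⋯ ≥ λ_b > 0. Then the p-part of lcm(r,s) equals the p-part of gcd(λ_1,…,λ_b); equivalently, max(r_p, s_p) = min((λ_1)_p,…,(λ_b)_p). -/
/-!
For `q = p ^ k`, consider whether `z = x ^ q` has a canonical conjugate, that is, whether
`d * z - z * d = 1` for some `d`. This property is invariant under similarity, and it holds for a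
block-diagonal matrix exactly when it holds for every block. For the Jordan block `x = J_m` with
nilpotent part `N`, where `x ^ q = 1 + N ^ q`, it says that `p * q` divides `m`.

Over a field, `z` has a canonical conjugate if and only if every matrix commuting with `z` has trace
zero. Since traces are multiplicative, the Kronecker product of invertible matrices `A` and `B` has
one if and only if `A` or `B` does. For `(J_r ⊗ J_s) ^ q = J_r ^ q ⊗ J_s ^ q` this shows that
`p * q` divides `r` or `s` if and only if it divides every `λ_i`.
-/

open Kronecker

/-- The `m × m` Jordan block with eigenvalue `1`: ones on the main diagonal and the
superdiagonal, zeros elsewhere. -/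
def jordanBlock (F : Type*) [Zero F] [One F] (m : ℕ) : Matrix (Fin m) (Fin m) F :=
  Matrix.of fun i j => if (j : ℕ) = (i : ℕ) ∨ (j : ℕ) = (i : ℕ) + 1 then 1 else 0

/-- The block-diagonal matrix whose diagonal blocks are the Jordan blocks `J_{d i}`, `i : ι`. -/
def jordanBlockDiag (F : Type*) [Field F] {ι : Type} [DecidableEq ι] (d : ι → ℕ) :
    Matrix ((i : ι) × Fin (d i)) ((i : ι) × Fin (d i)) F :=
  Matrix.blockDiagonal' fun i => jordanBlock F (d i)

/-- Similarity of square matrices, possibly indexed by different (finite) types: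
both matrices represent the same linear endomorphism up to a linear change of basis. -/
def MatSimilar (F : Type*) [Field F] {n m : Type*} [Fintype n] [Fintype m]
    (A : Matrix n n F) (B : Matrix m m F) : Prop :=
  ∃ e : (n → F) ≃ₗ[F] (m → F), ∀ v, e (A.mulVec v) = B.mulVec (e v)

/-- The `p`-part of `n`: the largest power of `p` dividing `n`. -/
def pPart (p n : ℕ) : ℕ := p ^ (n.factorization p)

open Finset Matrix

/-! ### Canonical conjugates -/

/-- An element `z` of a ring has a canonical conjugate if it satisfies the canonical commutation
relation `d * z - z * d = 1` with some `d`, that is, if `1` lies in the range of `ad z`. -/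
def HasCanonicalConjugate {R : Type*} [Ring R] (z : R) : Prop :=
  ∃ d, d * z - z * d = 1

section Ring

variable {R S : Type*} [Ring R] [Ring S]

lemma HasCanonicalConjugate.map (φ : R →+* S) {z : R} (hz : HasCanonicalConjugate z) :
    HasCanonicalConjugate (φ z) := by
  obtain ⟨d, hd⟩ := hz
  exact ⟨φ d, by rw [← map_mul, ← map_mul, ← map_sub, hd, map_one]⟩

lemma hasCanonicalConjugate_map_iff (e : R ≃+* S) {z : R} :
    HasCanonicalConjugate (e z) ↔ HasCanonicalConjugate z :=
  ⟨fun h => by simpa using h.map (e.symm : S →+* R), fun h => h.map (e : R →+* S)⟩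

lemma hasCanonicalConjugate_one_add_iff {z : R} :
    HasCanonicalConjugate (1 + z) ↔ HasCanonicalConjugate z :=
  exists_congr fun d => by simp [mul_add, add_mul]

end Ring

section Trace

variable {n : Type*} [Fintype n]

lemma exists_forall_trace_mul_eq {R : Type*} [CommRing R] (φ : Module.Dual R (Matrix n n R)) :
    ∃ f : Matrix n n R, ∀ X, (f * X).trace = φ X := by
  classical
  let f : Matrix n n R := of fun i j => φ (single j i 1)
  have hφ : traceLinearMap n R R ∘ₗ LinearMap.mulLeft R f = φ := by
    refine Matrix.ext_linearMap R fun i j => LinearMap.ext_ring ?_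
    simp [f, trace_mul_single]
  exact ⟨f, fun X => LinearMap.congr_fun hφ X⟩

variable [DecidableEq n]

lemma HasCanonicalConjugate.trace_eq_zero {R : Type*} [CommRing R] {f z : Matrix n n R}
    (hz : HasCanonicalConjugate z) (hf : Commute f z) : f.trace = 0 := by
  obtain ⟨d, hd⟩ := hz
  calc f.trace = (f * d * z).trace - (f * z * d).trace := by
        rw [← trace_sub, mul_assoc, mul_assoc, ← mul_sub, hd, mul_one]
    _ = 0 := by rw [hf.eq, trace_mul_cycle f d z, sub_self]

/-- For the trace form, the range of `ad z` is the orthogonal complement of the centralizer of `z`,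
so `1` lies in it exactly when the trace vanishes on the centralizer. -/
lemma hasCanonicalConjugate_iff_forall_trace_eq_zero {F : Type*} [Field F] {z : Matrix n n F} :
    HasCanonicalConjugate z ↔ ∀ f, Commute f z → f.trace = 0 := by
  refine ⟨fun hz f hf => hz.trace_eq_zero hf, fun h => ?_⟩
  let ad : Module.End F (Matrix n n F) := LinearMap.mulRight F z - LinearMap.mulLeft F z
  suffices (1 : Matrix n n F) ∈ LinearMap.range ad from this
  refine (Subspace.forall_mem_dualAnnihilator_apply_eq_zero_iff _ _).1 fun φ hφ => ?_
  obtain ⟨f, hf⟩ := exists_forall_trace_mul_eq φ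
  have hcomm : Commute f z := by
    refine (ext_iff_trace_mul_right.2 fun d => ?_ : z * f = f * z).symm
    have had : (f * (d * z - z * d)).trace = 0 :=
      (hf _).trans ((Submodule.mem_dualAnnihilator φ).1 hφ _ ⟨d, rfl⟩)
    rw [mul_sub, trace_sub, sub_eq_zero, ← mul_assoc, ← mul_assoc, trace_mul_cycle] at had
    exact had
  rw [← hf 1, mul_one, h f hcomm]

end Trace

/-! ### Kronecker products and diagonal blocks -/

section Kronecker

variable {m n : Type*} [Fintype m] [Fintype n] [DecidableEq m] [DecidableEq n]

lemma kronecker_pow {R : Type*} [CommSemiring R] (A : Matrix m m R)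
    (B : Matrix n n R) (k : ℕ) : (A ⊗ₖ B) ^ k = (A ^ k) ⊗ₖ (B ^ k) := by
  induction k with
  | zero => simp
  | succ k ih => rw [pow_succ, ih, ← mul_kronecker_mul, pow_succ, pow_succ]

section CommRing

variable {R : Type*} [CommRing R] {A : Matrix m m R} {B : Matrix n n R}

lemma HasCanonicalConjugate.kronecker_of_left (hA : HasCanonicalConjugate A) (hB : IsUnit B) :
    HasCanonicalConjugate (A ⊗ₖ B) := by
  obtain ⟨d, hd⟩ := hA
  obtain ⟨u, rfl⟩ := hB
  refine ⟨d ⊗ₖ (↑u⁻¹ : Matrix n n R), ?_⟩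
  rw [← mul_kronecker_mul, ← mul_kronecker_mul, Units.inv_mul, Units.mul_inv,
    sub_eq_iff_eq_add.1 hd, add_kronecker, one_kronecker_one, add_sub_cancel_right]

lemma HasCanonicalConjugate.kronecker_of_right (hA : IsUnit A) (hB : HasCanonicalConjugate B) :
    HasCanonicalConjugate (A ⊗ₖ B) := by
  obtain ⟨d, hd⟩ := hB
  obtain ⟨u, rfl⟩ := hA
  refine ⟨(↑u⁻¹ : Matrix m m R) ⊗ₖ d, ?_⟩
  rw [← mul_kronecker_mul, ← mul_kronecker_mul, Units.inv_mul, Units.mul_inv,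
    sub_eq_iff_eq_add.1 hd, kronecker_add, one_kronecker_one, add_sub_cancel_right]

end CommRing

/-- Traces are multiplicative, so centralizing matrices of nonzero trace for `A` and for `B` give
one for `A ⊗ₖ B`. -/
lemma hasCanonicalConjugate_kronecker_iff {F : Type*} [Field F] {A : Matrix m m F}
    {B : Matrix n n F} (hA : IsUnit A) (hB : IsUnit B) :
    HasCanonicalConjugate (A ⊗ₖ B) ↔ HasCanonicalConjugate A ∨ HasCanonicalConjugate B := by
  refine ⟨fun h => ?_, fun h => h.elim (·.kronecker_of_left hB) (.kronecker_of_right hA)⟩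
  simp only [hasCanonicalConjugate_iff_forall_trace_eq_zero (z := A),
    hasCanonicalConjugate_iff_forall_trace_eq_zero (z := B)]
  by_contra! ⟨⟨f, hf, hf0⟩, g, hg, hg0⟩
  have hfg : Commute (f ⊗ₖ g) (A ⊗ₖ B) := by
    rw [Commute, SemiconjBy, ← mul_kronecker_mul, ← mul_kronecker_mul, hf.eq, hg.eq]
  have htrace := h.trace_eq_zero hfg
  rw [trace_kronecker] at htrace
  exact mul_ne_zero hf0 hg0 htrace

end Kronecker

section Blocks

variable {ι : Type*} [Fintype ι] [DecidableEq ι] {m : ι → Type*} [∀ i, Fintype (m i)]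
  {R : Type*}

lemma blockDiag'_mul_blockDiagonal' [NonUnitalNonAssocSemiring R]
    (X : Matrix (Σ i, m i) (Σ i, m i) R) (D : ∀ i, Matrix (m i) (m i) R) (i : ι) :
    blockDiag' (X * blockDiagonal' D) i = blockDiag' X i * D i := by
  ext a c
  rw [blockDiag'_apply, mul_apply, Fintype.sum_sigma, Finset.sum_eq_single i]
  · simp [mul_apply, blockDiag'_apply]
  · exact fun j _ hj => sum_eq_zero fun x _ => by simp [blockDiagonal'_apply_ne _ _ _ hj]
  · simp

lemma blockDiag'_blockDiagonal'_mul [NonUnitalNonAssocSemiring R]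
    (D : ∀ i, Matrix (m i) (m i) R) (X : Matrix (Σ i, m i) (Σ i, m i) R) (i : ι) :
    blockDiag' (blockDiagonal' D * X) i = D i * blockDiag' X i := by
  ext a c
  rw [blockDiag'_apply, mul_apply, Fintype.sum_sigma, Finset.sum_eq_single i]
  · simp [mul_apply, blockDiag'_apply]
  · exact fun j _ hj => sum_eq_zero fun x _ => by simp [blockDiagonal'_apply_ne _ _ _ hj.symm]
  · simp

lemma hasCanonicalConjugate_blockDiagonal'_iff [Ring R] [∀ i, DecidableEq (m i)]
    {D : ∀ i, Matrix (m i) (m i) R} :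
    HasCanonicalConjugate (blockDiagonal' D) ↔ ∀ i, HasCanonicalConjugate (D i) := by
  constructor
  · rintro ⟨X, hX⟩ i
    refine ⟨blockDiag' X i, ?_⟩
    rw [← blockDiag'_mul_blockDiagonal', ← blockDiag'_blockDiagonal'_mul, ← Pi.sub_apply,
      ← blockDiag'_sub, hX, blockDiag'_one, Pi.one_apply]
  · intro h
    choose d hd using h
    refine ⟨blockDiagonal' d, ?_⟩
    rw [← blockDiagonal'_mul, ← blockDiagonal'_mul, ← blockDiagonal'_sub, ← blockDiagonal'_one]
    exact congrArg blockDiagonal' (funext hd)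

end Blocks

/-! ### Jordan blocks -/

/-- The residue classes of `0` and `q - 1` have `⌈m / q⌉` and `⌊m / q⌋` elements below `m`. -/
lemma mul_dvd_of_forall_dvd_count_mod {m p q : ℕ} (hp : p ≠ 1) (hq : 0 < q)
    (h : ∀ c < q, p ∣ Nat.count (· % q = c) m) : q * p ∣ m := by
  have hcount (c : ℕ) (hc : c < q) : p ∣ m / q + if c < m % q then 1 else 0 := by
    have hcard := Nat.count_modEq_card m hq c
    simp only [Nat.ModEq, Nat.mod_eq_of_lt hc] at hcard
    exact hcard ▸ h c hc
  have hdiv : p ∣ m / q := by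
    have hlast := hcount (q - 1) (by lia)
    rwa [if_neg (by have := Nat.mod_lt m hq; lia), add_zero] at hlast
  have hmod : m % q = 0 := by
    by_contra hne
    have hfirst := hcount 0 hq
    rw [if_pos (Nat.pos_of_ne_zero hne), Nat.dvd_add_right hdiv, Nat.dvd_one] at hfirst
    exact hp hfirst
  rw [← Nat.div_add_mod m q, hmod, add_zero]
  exact mul_dvd_mul_left q hdiv

/-- The `m × m` matrix with ones on the `k`-th superdiagonal and zeros elsewhere: the `k`-th power
of the nilpotent part of the Jordan block of size `m`. -/
def shift (R : Type*) [Zero R] [One R] (m k : ℕ) : Matrix (Fin m) (Fin m) R :=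
  of fun i j => if (j : ℕ) = i + k then 1 else 0

section Shift

variable {R : Type*} {m : ℕ}

lemma shift_mul_apply [NonAssocSemiring R] (k : ℕ) (X : Matrix (Fin m) (Fin m) R) (i j : Fin m) :
    (shift R m k * X) i j = if h : (i : ℕ) + k < m then X ⟨i + k, h⟩ j else 0 := by
  simp only [mul_apply, shift, of_apply, ite_mul, one_mul, zero_mul]
  split_ifs with h
  · rw [Finset.sum_eq_single ⟨i + k, h⟩]
    · simp
    · exact fun x _ hx => if_neg fun hi => hx (Fin.ext hi)
    · simp
  · exact sum_eq_zero fun x _ => if_neg (by lia)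

lemma mul_shift_apply [NonAssocSemiring R] (k : ℕ) (X : Matrix (Fin m) (Fin m) R) (i j : Fin m) :
    (X * shift R m k) i j = if k ≤ (j : ℕ) then X i ⟨j - k, by lia⟩ else 0 := by
  simp only [mul_apply, shift, of_apply, mul_ite, mul_one, mul_zero]
  split_ifs with h
  · rw [Finset.sum_eq_single ⟨j - k, by lia⟩]
    · simp [h]
    · exact fun x _ hx => if_neg fun hj => hx (Fin.ext (by simp [hj]))
    · simp
  · exact sum_eq_zero fun x _ => if_neg (by lia)

lemma shift_one_pow [Semiring R] (k : ℕ) : shift R m 1 ^ k = shift R m k := by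
  induction k with
  | zero => ext i j; simp [shift, one_apply, Fin.ext_iff, eq_comm]
  | succ k ih =>
    ext i j
    rw [pow_succ, ih, mul_shift_apply]
    simp only [shift, of_apply]
    split_ifs <;> first | rfl | lia

lemma jordanBlock_eq_one_add_shift [Semiring R] (m : ℕ) : jordanBlock R m = 1 + shift R m 1 := by
  ext i j
  simp only [jordanBlock, shift, of_apply, Matrix.add_apply, one_apply, Fin.ext_iff]
  split_ifs <;> first | lia | simp

lemma isUnit_jordanBlock [Ring R] (m : ℕ) : IsUnit (jordanBlock R m) := by
  rw [jordanBlock_eq_one_add_shift]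
  refine IsNilpotent.isUnit_one_add ⟨m, ?_⟩
  rw [shift_one_pow]
  ext i j
  exact if_neg (by lia)

lemma jordanBlock_pow_char_pow [CommRing R] (p : ℕ) [Fact p.Prime] [CharP R p] (m k : ℕ) :
    jordanBlock R m ^ p ^ k = 1 + shift R m (p ^ k) := by
  rcases isEmpty_or_nonempty (Fin m) with _ | _
  · exact Subsingleton.elim _ _
  · rw [jordanBlock_eq_one_add_shift, add_pow_char_pow_of_commute _ _ (Commute.one_left _),
      one_pow, shift_one_pow]

/-- The conjugate is the transposed shift with weight `-(j / q + 1)` on the basis vector `e_j`. The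
relation on the last `q` basis vectors, which the transposed shift kills, amounts to `m / q = 0`
in `R`. -/
lemma hasCanonicalConjugate_shift_of_dvd [Ring R] (p : ℕ) [CharP R p] {q : ℕ} (hq : 0 < q)
    (hm : q * p ∣ m) : HasCanonicalConjugate (shift R m q) := by
  let d : Matrix (Fin m) (Fin m) R :=
    of fun i j => if (i : ℕ) = j + q then -((j / q : ℕ) + 1 : R) else 0
  have hd_mul : d * shift R m q = diagonal fun i : Fin m => -((i / q : ℕ) : R) := by
    ext i j
    rw [mul_shift_apply, diagonal_apply]
    split_ifs with hj hij hij
    · have hdiv : (j - q) / q + 1 = j / q := (Nat.div_eq_sub_div hq hj).symm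
      simp [d, hij, Nat.sub_add_cancel hj, ← hdiv]
    · exact if_neg fun h => hij (Fin.ext (by simpa [hj] using h))
    · simp [hij, Nat.div_eq_of_lt (not_le.1 hj)]
    · rfl
  have hmul_d : shift R m q * d = diagonal fun i : Fin m => -((i / q : ℕ) + 1 : R) := by
    ext i j
    rw [shift_mul_apply, diagonal_apply]
    split_ifs with hi hij hij
    · simp [d, hij]
    · exact if_neg fun h => hij (Fin.ext (by simpa using h))
    · obtain ⟨c, rfl⟩ := hm
      have hdiv : (i : ℕ) / q + 1 = p * c := by
        rw [← Nat.add_div_right _ hq]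
        exact Nat.div_eq_of_lt_le (by linarith) (by linarith [i.2])
      rw [← Nat.cast_add_one, hdiv]
      simp
    · rfl
  refine ⟨d, ?_⟩
  rw [hd_mul, hmul_d, diagonal_sub, ← diagonal_one]
  simp

/-- The projection onto the basis vectors in a residue class modulo `q` commutes with the shift, and
its trace is the size of the class. -/
lemma dvd_of_hasCanonicalConjugate_shift [CommRing R] {p : ℕ} [CharP R p] (hp : p ≠ 1) {q : ℕ}
    (hq : 0 < q) (h : HasCanonicalConjugate (shift R m q)) : q * p ∣ m := by
  refine mul_dvd_of_forall_dvd_count_mod hp hq fun c _ => ?_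
  let f : Matrix (Fin m) (Fin m) R := diagonal fun i => if (i : ℕ) % q = c then 1 else 0
  have hf : Commute f (shift R m q) := by
    ext i j
    simp only [f, diagonal_mul, mul_diagonal, shift, of_apply]
    split_ifs <;> simp_all
  have htrace : f.trace = (Nat.count (· % q = c) m : R) := by
    rw [trace_diagonal, Fin.sum_univ_eq_sum_range fun i => if i % q = c then (1 : R) else 0,
      Nat.count_eq_card_filter_range, sum_boole]
  rw [← CharP.cast_eq_zero_iff R p, ← htrace, h.trace_eq_zero hf]

lemma hasCanonicalConjugate_jordanBlock_pow_iff [CommRing R] (p : ℕ) [hp : Fact p.Prime]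
    [CharP R p] (m k : ℕ) :
    HasCanonicalConjugate (jordanBlock R m ^ p ^ k) ↔ p ^ (k + 1) ∣ m := by
  have hq : 0 < p ^ k := pow_pos hp.out.pos k
  rw [jordanBlock_pow_char_pow, hasCanonicalConjugate_one_add_iff, pow_succ]
  exact ⟨dvd_of_hasCanonicalConjugate_shift hp.out.ne_one hq,
    hasCanonicalConjugate_shift_of_dvd p hq⟩

end Shift

/-! ### Similarity and `p`-parts -/

lemma MatSimilar.exists_algEquiv {F : Type*} [Field F] {m n : Type*} [Fintype m] [Fintype n]
    [DecidableEq m] [DecidableEq n] {A : Matrix m m F} {B : Matrix n n F} (h : MatSimilar F A B) :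
    ∃ Φ : Matrix m m F ≃ₐ[F] Matrix n n F, Φ A = B := by
  obtain ⟨e, he⟩ := h
  refine ⟨(toLinAlgEquiv'.trans (e.conjAlgEquiv F)).trans LinearMap.toMatrixAlgEquiv',
    toLinAlgEquiv'.injective (LinearMap.ext fun v => ?_)⟩
  simp [LinearEquiv.conjAlgEquiv_apply, he]

lemma prime_pow_dvd_lcm_iff {p : ℕ} (hp : p.Prime) {k a b : ℕ} :
    p ^ k ∣ Nat.lcm a b ↔ p ^ k ∣ a ∨ p ^ k ∣ b := by
  rcases eq_or_ne a 0 with rfl | ha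
  · simp
  rcases eq_or_ne b 0 with rfl | hb
  · simp
  rw [hp.pow_dvd_iff_le_factorization (Nat.lcm_ne_zero ha hb),
    hp.pow_dvd_iff_le_factorization ha, hp.pow_dvd_iff_le_factorization hb,
    Nat.factorization_lcm ha hb, Finsupp.sup_apply, le_sup_iff]

lemma pPart_eq_of_forall_pow_dvd_iff {p : ℕ} (hp : p.Prime) {a b : ℕ}
    (h : ∀ k, p ^ k ∣ a ↔ p ^ k ∣ b) : pPart p a = pPart p b := by
  rw [pPart, pPart, Nat.factorization_def _ hp, Nat.factorization_def _ hp,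
    ← Nat.toNat_emultiplicity, ← Nat.toNat_emultiplicity, emultiplicity_eq_emultiplicity_iff.2 h]

theorem stmt_0_general {F : Type*} [Field F] {p : ℕ} [Fact p.Prime] [CharP F p] {r s : ℕ}
    {ι : Type} [Fintype ι] [DecidableEq ι] {d : ι → ℕ}
    (h : MatSimilar F (jordanBlock F r ⊗ₖ jordanBlock F s) (jordanBlockDiag F d)) (k : ℕ) :
    p ^ k ∣ r ∨ p ^ k ∣ s ↔ ∀ i, p ^ k ∣ d i := by
  cases k with
  | zero => simp
  | succ k =>
    obtain ⟨Φ, hΦ⟩ := h.exists_algEquiv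
    have hpow : Φ ((jordanBlock F r ^ p ^ k) ⊗ₖ (jordanBlock F s ^ p ^ k)) =
        blockDiagonal' fun i => jordanBlock F (d i) ^ p ^ k := by
      rw [← kronecker_pow, map_pow, hΦ, jordanBlockDiag, ← blockDiagonal'_pow]
      rfl
    simp only [← hasCanonicalConjugate_jordanBlock_pow_iff (R := F) p]
    rw [← hasCanonicalConjugate_kronecker_iff ((isUnit_jordanBlock r).pow _)
        ((isUnit_jordanBlock s).pow _), ← hasCanonicalConjugate_blockDiagonal'_iff, ← hpow]
    exact (hasCanonicalConjugate_map_iff Φ.toRingEquiv).symm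

/-- The `p`-parts of `lcm(r, s)` and `gcd(λ₁, …, λ_b)` are equal. -/
theorem stmt_0 {F : Type*} [Field F] (p : ℕ) (hp : p.Prime) [CharP F p]
    (r s : ℕ) (hr : 0 < r) (hs : 0 < s)
    (b : ℕ) (lam : Fin b → ℕ) (hanti : Antitone lam) (hpos : ∀ i, 0 < lam i)
    (hsim : MatSimilar F (jordanBlock F r ⊗ₖ jordanBlock F s) (jordanBlockDiag F lam)) :
    pPart p (Nat.lcm r s) = pPart p (Finset.univ.gcd lam) := by
  have : Fact p.Prime := ⟨hp⟩
  exact pPart_eq_of_forall_pow_dvd_iff hp fun k => by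
    simpa only [prime_pow_dvd_lcm_iff hp, Finset.dvd_gcd_iff, mem_univ, true_imp_iff] using
      stmt_0_general hsim k
end

section
/- Let p be a prime, F a field of characteristic p, and r, s positive integers. Suppose the Kronecker product J_r ⊗ J_s is similar over F to the block-diagonal matrix consisting, for each 1 ≤ i ≤ t, of exactly m_i ≥ 1 diagonal blocks equal to J_{μ_i}, where μ_1 > ⋯ > μ_t > 0. Then for every index i with m_i > 1, the prime p divides μ_i. -/
open Kronecker

/-!
The number of Jordan blocks of size `n + 1` of a nilpotent operator `Z` on `V` is the dimension of
the image `U` of `ker Z ^ (n + 1)` in `Q = V / (ker Z ^ n + Z V)`. Suppose that `C = [D, Z]`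
commutes with `Z` for some operator `D`, so that `[D, Z ^ (n + 1)] = (n + 1) Z ^ n C`. Applying
this to `w` in `ker Z ^ (n + 1)` gives `Z ^ n ((n + 1) C w + Z D w) = 0`, so `C` kills `U` when
`n + 1` is invertible. As an endomorphism of the finite-dimensional space `Q` has kernel and
cokernel of the same dimension, `dim U ≤ dim Q / C Q ≤ dim V / (Z V + C V)`.

With `N_m = J_m - 1`, the operators `X = N_r ⊗ 1` and `Y = 1 ⊗ N_s` satisfy
`Z = J_r ⊗ J_s - 1 = X + Y + XY`. The operator `D = 1 ⊗ diag(0, 1, …, s - 1)` has `[D, X] = 0` and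
`[D, Y] = -Y`, so `C = -(Y + XY)`. Now `X = Z + C` and `Y = -C - XY`, so `Z V + C V` contains
`X V + Y V`, whose codimension is at most one. Hence a block size that is nonzero in `F` occurs at
most once.
-/

namespace JordanKronecker

open Module LinearMap Matrix

lemma lie_pow_succ_of_commute {R : Type*} [Ring R] {D Z : R} (h : Commute Z ⁅D, Z⁆) (n : ℕ) :
    ⁅D, Z ^ (n + 1)⁆ = (n + 1) • (Z ^ n * ⁅D, Z⁆) := by
  induction n with
  | zero => simp
  | succ n ih =>
    calc ⁅D, Z ^ (n + 2)⁆ = ⁅D, Z ^ (n + 1)⁆ * Z + Z ^ (n + 1) * ⁅D, Z⁆ := by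
          simp only [LieRing.of_associative_ring_bracket, pow_succ]
          noncomm_ring
      _ = (n + 1) • (Z ^ (n + 1) * ⁅D, Z⁆) + Z ^ (n + 1) * ⁅D, Z⁆ := by
          rw [ih, smul_mul_assoc, mul_assoc, ← h.eq, ← mul_assoc, ← pow_succ]
      _ = (n + 2) • (Z ^ (n + 1) * ⁅D, Z⁆) := (succ_nsmul _ _).symm

section Multiplicity

variable {K V W : Type*} [Field K] [AddCommGroup V] [Module K V] [AddCommGroup W] [Module K W]

/-- The image of `ker Z ^ (n + 1)` in `V ⧸ (ker Z ^ n ⊔ range Z)`. When `V` is finite-dimensional,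
its dimension is the number of Jordan blocks of `Z` with eigenvalue `0` and size `n + 1`; the index
is shifted so that the size is positive. -/
def jordanSpace (Z : End K V) (n : ℕ) : Submodule K (V ⧸ (ker (Z ^ n) ⊔ range Z)) :=
  (ker (Z ^ (n + 1))).map (ker (Z ^ n) ⊔ range Z).mkQ

lemma finrank_jordanSpace_conj (e : V ≃ₗ[K] W) (Z : End K V) (n : ℕ) :
    finrank K (jordanSpace (e.conj Z) n) = finrank K (jordanSpace Z n) := by
  have hker (k : ℕ) : (ker (Z ^ k)).map e.toLinearMap = ker (e.conj Z ^ k) := by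
    have hpow : e.conj Z ^ k = e.conj (Z ^ k) := (map_pow (LinearEquiv.conjRingEquiv e) Z k).symm
    rw [hpow, LinearEquiv.conj_apply, ker_comp, LinearEquiv.ker_comp,
      Submodule.map_equiv_eq_comap_symm]
  have hrange : (range Z).map e.toLinearMap = range (e.conj Z) := by
    rw [LinearEquiv.conj_apply, range_comp, LinearEquiv.range, Submodule.map_top, range_comp]
  have hsup : (ker (Z ^ n) ⊔ range Z).map e.toLinearMap =
      ker (e.conj Z ^ n) ⊔ range (e.conj Z) := by
    rw [Submodule.map_sup, hker, hrange]
  have hmap : (jordanSpace Z n).map (Submodule.Quotient.equiv _ _ e hsup).toLinearMap =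
      jordanSpace (e.conj Z) n := by
    rw [jordanSpace, jordanSpace, ← hker (n + 1), ← Submodule.map_comp, ← Submodule.map_comp]
    rfl
  rw [← hmap, LinearEquiv.finrank_map_eq]

lemma finrank_le_finrank_jordanSpace [FiniteDimensional K V] {Z : End K V} {n : ℕ} (f : V →ₗ[K] W)
    (hker : ker (Z ^ n) ≤ ker f) (hrange : range Z ≤ ker f) (htop : (ker (Z ^ (n + 1))).map f = ⊤) :
    finrank K W ≤ finrank K (jordanSpace Z n) := by
  let g : V ⧸ (ker (Z ^ n) ⊔ range Z) →ₗ[K] W := Submodule.liftQ _ f (sup_le hker hrange)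
  have hg : (jordanSpace Z n).map g = ⊤ := by
    rw [jordanSpace, ← Submodule.map_comp, Submodule.liftQ_mkQ, htop]
  rw [← finrank_top K W, ← hg]
  exact Submodule.finrank_map_le g _

lemma finrank_ker_eq_finrank_quotient_range [FiniteDimensional K V] (f : End K V) :
    finrank K (ker f) = finrank K (V ⧸ range f) := by
  have hker := f.finrank_range_add_finrank_ker
  have hcoker := (range f).finrank_quotient_add_finrank
  omega

lemma lie_apply_mem_of_mem_ker_pow {Z D : End K V} (hC : Commute Z ⁅D, Z⁆) {n : ℕ}
    (hn : ((n + 1 : ℕ) : K) ≠ 0) {w : V} (hw : w ∈ ker (Z ^ (n + 1))) :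
    ⁅D, Z⁆ w ∈ ker (Z ^ n) ⊔ range Z := by
  rw [LinearMap.mem_ker] at hw
  have hlie := LinearMap.congr_fun (lie_pow_succ_of_commute hC n) w
  have hmem : ((n + 1 : ℕ) : K) • ⁅D, Z⁆ w + Z (D w) ∈ ker (Z ^ n) := by
    rw [LieRing.of_associative_ring_bracket D, LinearMap.sub_apply, Module.End.mul_apply, hw,
      map_zero, zero_sub, LinearMap.smul_apply, pow_succ, Module.End.mul_apply,
      Module.End.mul_apply, Module.End.mul_apply, ← Nat.cast_smul_eq_nsmul K] at hlie
    rw [LinearMap.mem_ker, map_add, map_smul, ← hlie, neg_add_cancel]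
  have hsmul : ((n + 1 : ℕ) : K) • ⁅D, Z⁆ w ∈ ker (Z ^ n) ⊔ range Z := by
    have := Submodule.sub_mem _ (Submodule.mem_sup_left hmem)
      (Submodule.mem_sup_right (mem_range_self Z (D w)))
    rwa [add_sub_cancel_right] at this
  rwa [Submodule.smul_mem_iff _ hn] at hsmul

theorem finrank_jordanSpace_le_finrank_quotient [FiniteDimensional K V] {Z D : End K V}
    (hC : Commute Z ⁅D, Z⁆) {n : ℕ} (hn : ((n + 1 : ℕ) : K) ≠ 0) :
    finrank K (jordanSpace Z n) ≤ finrank K (V ⧸ (range Z ⊔ range ⁅D, Z⁆)) := by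
  set C := ⁅D, Z⁆
  set Q := ker (Z ^ n) ⊔ range Z
  have hCQ : Q ≤ Q.comap C := by
    refine sup_le (fun w hw => Submodule.mem_sup_left ?_) ?_
    · rw [LinearMap.mem_ker] at hw ⊢
      rw [← Module.End.mul_apply, (hC.pow_left n).eq, Module.End.mul_apply, hw, map_zero]
    · rintro _ ⟨w, rfl⟩
      exact Submodule.mem_sup_right ⟨C w, LinearMap.congr_fun hC.eq w⟩
  have hker : jordanSpace Z n ≤ ker (Q.mapQ Q C hCQ) := by
    rintro _ ⟨w, hw, rfl⟩
    exact (Submodule.Quotient.mk_eq_zero Q).2 (lie_apply_mem_of_mem_ker_pow hC hn hw)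
  let π : V →ₗ[K] (V ⧸ Q) ⧸ range (Q.mapQ Q C hCQ) := (Submodule.mkQ _).comp Q.mkQ
  have hπ : Function.Surjective π :=
    (Submodule.mkQ_surjective _).comp (Submodule.mkQ_surjective _)
  have hle : range Z ⊔ range C ≤ ker π := by
    refine sup_le ?_ ?_ <;> rintro _ ⟨w, rfl⟩
    · have hZ : Q.mkQ (Z w) = 0 :=
        (Submodule.Quotient.mk_eq_zero Q).2 (Submodule.mem_sup_right (mem_range_self Z w))
      simp only [LinearMap.mem_ker, π, LinearMap.comp_apply, hZ, map_zero]
    · exact (Submodule.Quotient.mk_eq_zero _).2 ⟨Q.mkQ w, rfl⟩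
  calc finrank K (jordanSpace Z n) ≤ finrank K (ker (Q.mapQ Q C hCQ)) :=
        Submodule.finrank_mono hker
    _ = finrank K ((V ⧸ Q) ⧸ range (Q.mapQ Q C hCQ)) := finrank_ker_eq_finrank_quotient_range _
    _ ≤ finrank K (V ⧸ (range Z ⊔ range C)) :=
        finrank_le_finrank_of_surjective (f := Submodule.liftQ _ π hle)
          (range_eq_top.1 (by rw [Submodule.range_liftQ, range_eq_top.2 hπ]))

theorem finrank_jordanSpace_add_add_mul_le [FiniteDimensional K V] {X Y D : End K V}
    (hXY : Commute X Y) (hDX : Commute D X) (hDY : ⁅D, Y⁆ = -Y) {n : ℕ}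
    (hn : ((n + 1 : ℕ) : K) ≠ 0) :
    finrank K (jordanSpace (X + Y + X * Y) n) ≤ finrank K (V ⧸ (range X ⊔ range Y)) := by
  set Z := X + Y + X * Y with hZ
  have hC : ⁅D, Z⁆ = -(Y + X * Y) := by
    have hD : ⁅D, Z⁆ = ⁅D, X⁆ + ⁅D, Y⁆ + (⁅D, X⁆ * Y + X * ⁅D, Y⁆) := by
      simp only [LieRing.of_associative_ring_bracket, hZ]
      noncomm_ring
    rw [hD, hDX.lie_eq, hDY]
    noncomm_ring
  have hZX : Commute Z X :=
    ((Commute.refl X).add_left hXY.symm).add_left ((Commute.refl X).mul_left hXY.symm)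
  have hZY : Commute Z Y :=
    (hXY.add_left (Commute.refl Y)).add_left (hXY.mul_left (Commute.refl Y))
  have hZC : Commute Z ⁅D, Z⁆ := hC ▸ (hZY.add_right (hZX.mul_right hZY)).neg_right
  have hle : range X ⊔ range Y ≤ range Z ⊔ range ⁅D, Z⁆ := by
    have hX : X = Z + ⁅D, Z⁆ := by rw [hC, hZ]; abel
    have hY : Y = -⁅D, Z⁆ - X * Y := by rw [hC]; abel
    have hXle (w : V) : X w ∈ range Z ⊔ range ⁅D, Z⁆ := by
      rw [hX]
      exact Submodule.add_mem_sup (mem_range_self Z w) (mem_range_self ⁅D, Z⁆ w)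
    refine sup_le ?_ ?_ <;> rintro _ ⟨w, rfl⟩
    · exact hXle w
    · rw [hY]
      exact Submodule.sub_mem _
        (Submodule.neg_mem _ (Submodule.mem_sup_right (mem_range_self _ w))) (hXle (Y w))
  exact (finrank_jordanSpace_le_finrank_quotient hZC hn).trans
    (finrank_le_finrank_of_surjective (Submodule.factor_surjective hle))

lemma finrank_quotient_le_one_of_span_singleton_sup_eq_top {P : Submodule K V} {v : V}
    (h : K ∙ v ⊔ P = ⊤) : finrank K (V ⧸ P) ≤ 1 := by
  refine finrank_le_one (P.mkQ v) fun q => ?_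
  obtain ⟨w, rfl⟩ := P.mkQ_surjective q
  obtain ⟨_, hu, x, hx, rfl⟩ := Submodule.mem_sup.1 (h ▸ Submodule.mem_top : w ∈ K ∙ v ⊔ P)
  obtain ⟨c, rfl⟩ := Submodule.mem_span_singleton.1 hu
  exact ⟨c, by simp [(Submodule.Quotient.mk_eq_zero P).2 hx]⟩

end Multiplicity

lemma lie_one_kronecker {R m n : Type*} [CommRing R] [Fintype m] [Fintype n] [DecidableEq m]
    (A : Matrix m m R) (D B : Matrix n n R) :
    ⁅(1 : Matrix m m R) ⊗ₖ D, A ⊗ₖ B⁆ = A ⊗ₖ ⁅D, B⁆ := by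
  simp only [Ring.lie_def, ← mul_kronecker_mul, Matrix.one_mul, Matrix.mul_one]
  ext i j
  simp [mul_sub]

section NilpotentJordanBlock

/-- The nilpotent Jordan block `J_m - 1`. -/
def nilpotentJordanBlock (R : Type*) [Zero R] [One R] (m : ℕ) : Matrix (Fin m) (Fin m) R :=
  of fun i j => if (j : ℕ) = i + 1 then 1 else 0

lemma jordanBlock_eq_one_add (R : Type*) [Ring R] (m : ℕ) :
    jordanBlock R m = 1 + nilpotentJordanBlock R m := by
  ext i j
  simp only [jordanBlock, nilpotentJordanBlock, Matrix.add_apply, one_apply, of_apply, Fin.ext_iff]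
  split_ifs <;> first | omega | simp

lemma lie_diagonal_nilpotentJordanBlock {R : Type*} [Ring R] (m : ℕ) :
    ⁅diagonal fun i : Fin m => ((i : ℕ) : R), nilpotentJordanBlock R m⁆ =
      -nilpotentJordanBlock R m := by
  ext i j
  simp only [LieRing.of_associative_ring_bracket, Matrix.sub_apply, diagonal_mul, mul_diagonal,
    nilpotentJordanBlock, of_apply, Matrix.neg_apply]
  split_ifs with h
  · simp [h]
  · simp

variable {R : Type*} [Semiring R]

lemma nilpotentJordanBlock_mulVec_apply {m : ℕ} (v : Fin m → R) (i : Fin m) :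
    (nilpotentJordanBlock R m *ᵥ v) i = if h : (i : ℕ) + 1 < m then v ⟨i + 1, h⟩ else 0 := by
  simp only [mulVec, dotProduct, nilpotentJordanBlock, of_apply, ite_mul, one_mul, zero_mul]
  split_ifs with h
  · simp [← Fin.ext_iff (b := ⟨i + 1, h⟩)]
  · exact Finset.sum_eq_zero fun j _ => if_neg (by omega)

lemma nilpotentJordanBlock_pow_mulVec_apply {m : ℕ} (k : ℕ) (v : Fin m → R) (i : Fin m) :
    (nilpotentJordanBlock R m ^ k *ᵥ v) i = if h : (i : ℕ) + k < m then v ⟨i + k, h⟩ else 0 := by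
  induction k generalizing v with
  | zero => simp
  | succ k ih =>
    rw [pow_succ, ← mulVec_mulVec, ih]
    simp only [nilpotentJordanBlock_mulVec_apply]
    split_ifs <;> first | rfl | omega

lemma nilpotentJordanBlock_kronecker_one_mulVec_single {m : ℕ} {n : Type*} [Fintype n]
    [DecidableEq n] {i : Fin m} (hi : (i : ℕ) + 1 < m) (j : n) :
    (nilpotentJordanBlock R m ⊗ₖ (1 : Matrix n n R)) *ᵥ Pi.single (⟨i + 1, hi⟩, j) 1 =
      Pi.single (i, j) 1 := by
  ext ⟨a, b⟩
  simp [nilpotentJordanBlock, one_apply, Pi.single_apply, Fin.ext_iff, ← ite_and, eq_comm, and_comm]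

lemma one_kronecker_nilpotentJordanBlock_mulVec_single {m : ℕ} {n : Type*} [Fintype n]
    [DecidableEq n] (i : n) {j : Fin m} (hj : (j : ℕ) + 1 < m) :
    ((1 : Matrix n n R) ⊗ₖ nilpotentJordanBlock R m) *ᵥ Pi.single (i, ⟨j + 1, hj⟩) 1 =
      Pi.single (i, j) 1 := by
  ext ⟨a, b⟩
  simp [nilpotentJordanBlock, one_apply, Pi.single_apply, Fin.ext_iff, ← ite_and, eq_comm, and_comm]

end NilpotentJordanBlock

section Blocks

lemma blockDiagonal'_mulVec_apply {R ι : Type*} {m n : ι → Type*} [NonUnitalNonAssocSemiring R]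
    [Fintype ι] [DecidableEq ι] [∀ x, Fintype (n x)] (A : ∀ x, Matrix (m x) (n x) R)
    (v : ((x : ι) × n x) → R) (x : ι) (i : m x) :
    (blockDiagonal' A *ᵥ v) ⟨x, i⟩ = (A x *ᵥ fun j => v ⟨x, j⟩) i := by
  simp only [mulVec, dotProduct, Fintype.sum_sigma]
  rw [Fintype.sum_eq_single x fun y hy => ?_]
  · simp only [blockDiagonal'_apply_eq]
  · simp only [blockDiagonal'_apply_ne A i _ hy.symm, zero_mul, Finset.sum_const_zero]

variable {F : Type*} [Field F] {ι : Type}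

/-- The position of the last basis vector of a block of size `n + 1`, which generates the block. -/
def lastIndex (d : ι → ℕ) (n : ℕ) (x : {x // d x = n + 1}) : (x : ι) × Fin (d x) :=
  ⟨x, ⟨n, by omega⟩⟩

lemma lastIndex_injective (d : ι → ℕ) (n : ℕ) : Function.Injective (lastIndex d n) :=
  fun _ _ h => Subtype.ext (congrArg Sigma.fst h)

variable [Fintype ι] [DecidableEq ι]

lemma jordanBlockDiag_sub_one_pow_apply (d : ι → ℕ) (k : ℕ) (v : ((x : ι) × Fin (d x)) → F)
    (x : ι) (i : Fin (d x)) :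
    (toLinAlgEquiv' (jordanBlockDiag F d - 1) ^ k) v ⟨x, i⟩ =
      if h : (i : ℕ) + k < d x then v ⟨x, i + k, h⟩ else 0 := by
  have hN : jordanBlockDiag F d - 1 = blockDiagonal' fun x => nilpotentJordanBlock F (d x) := by
    rw [jordanBlockDiag, ← blockDiagonal'_one, ← blockDiagonal'_sub]
    congr 1
    funext x
    simp [jordanBlock_eq_one_add]
  rw [← map_pow, toLinAlgEquiv'_apply, hN, ← blockDiagonal'_pow, blockDiagonal'_mulVec_apply]
  exact nilpotentJordanBlock_pow_mulVec_apply k _ i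

lemma card_le_finrank_jordanSpace_jordanBlockDiag (d : ι → ℕ) (n : ℕ) :
    Fintype.card {x // d x = n + 1} ≤
      finrank F (jordanSpace (toLinAlgEquiv' (jordanBlockDiag F d - 1)) n) := by
  rw [← finrank_fintype_fun_eq_card F]
  refine finrank_le_finrank_jordanSpace (funLeft F F (lastIndex d n)) ?_ ?_ ?_
  · intro v hv
    ext ⟨x, hx⟩
    have h := congrFun (LinearMap.mem_ker.1 hv) ⟨x, 0, by omega⟩
    rw [jordanBlockDiag_sub_one_pow_apply, dif_pos (by simp [hx])] at h
    simpa [lastIndex, funLeft_apply] using h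
  · rintro _ ⟨v, rfl⟩
    ext ⟨x, hx⟩
    have h := jordanBlockDiag_sub_one_pow_apply (F := F) d 1 v x ⟨n, by omega⟩
    rw [dif_neg (by simp [hx]), pow_one] at h
    exact h
  · refine eq_top_iff.2 fun c _ => ⟨Function.extend (lastIndex d n) c 0, ?_, ?_⟩
    · rw [SetLike.mem_coe, LinearMap.mem_ker]
      ext ⟨x, i⟩
      rw [jordanBlockDiag_sub_one_pow_apply]
      split_ifs with h
      · refine Function.extend_apply' _ _ _ ?_
        rintro ⟨⟨y, hy⟩, heq⟩
        obtain rfl : y = x := congrArg Sigma.fst heq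
        have : n = i + (n + 1) := by simpa [lastIndex] using heq
        omega
      · rfl
    · exact funext fun x => (lastIndex_injective d n).extend_apply c 0 x

end Blocks

section KroneckerProduct

variable {F : Type*} [Field F]

lemma exists_span_sup_range_nilpotentJordanBlock_eq_top (r s : ℕ) :
    ∃ v : Fin r × Fin s → F,
      F ∙ v ⊔ (range (toLinAlgEquiv'
        (nilpotentJordanBlock F r ⊗ₖ (1 : Matrix (Fin s) (Fin s) F))) ⊔ range (toLinAlgEquiv'
        ((1 : Matrix (Fin r) (Fin r) F) ⊗ₖ nilpotentJordanBlock F s))) = ⊤ := by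
  -- The last basis vector, written so as to make sense for `r = 0` or `s = 0` too.
  refine ⟨fun q => if (q.1 : ℕ) + 1 = r ∧ (q.2 : ℕ) + 1 = s then 1 else 0, ?_⟩
  rw [eq_top_iff, ← (Pi.basisFun F (Fin r × Fin s)).span_eq, Submodule.span_le]
  rintro _ ⟨⟨i, j⟩, rfl⟩
  rw [Pi.basisFun_apply]
  by_cases hi : (i : ℕ) + 1 < r
  · exact Submodule.mem_sup_right (Submodule.mem_sup_left
      ⟨_, nilpotentJordanBlock_kronecker_one_mulVec_single hi j⟩)
  by_cases hj : (j : ℕ) + 1 < s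
  · exact Submodule.mem_sup_right (Submodule.mem_sup_right
      ⟨_, one_kronecker_nilpotentJordanBlock_mulVec_single i hj⟩)
  · refine Submodule.mem_sup_left (Submodule.mem_span_singleton.2 ⟨1, ?_⟩)
    ext ⟨a, b⟩
    simp only [one_smul, Pi.single_apply, Prod.mk.injEq, Fin.ext_iff]
    exact if_congr (by omega) rfl rfl

theorem finrank_jordanSpace_kronecker_le_one (r s : ℕ) {n : ℕ} (hn : ((n + 1 : ℕ) : F) ≠ 0) :
    finrank F (jordanSpace (toLinAlgEquiv' (jordanBlock F r ⊗ₖ jordanBlock F s - 1)) n) ≤ 1 := by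
  set X := nilpotentJordanBlock F r ⊗ₖ (1 : Matrix (Fin s) (Fin s) F) with hX
  set Y := (1 : Matrix (Fin r) (Fin r) F) ⊗ₖ nilpotentJordanBlock F s with hY
  set D := (1 : Matrix (Fin r) (Fin r) F) ⊗ₖ diagonal fun j : Fin s => ((j : ℕ) : F) with hD
  have hZ : jordanBlock F r ⊗ₖ jordanBlock F s - 1 = X + Y + X * Y := by
    rw [hX, hY, ← mul_kronecker_mul, jordanBlock_eq_one_add, jordanBlock_eq_one_add,
      add_kronecker, kronecker_add, kronecker_add, one_kronecker_one, Matrix.one_mul,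
      Matrix.mul_one]
    abel
  have hXY : Commute X Y := by
    simp only [hX, hY, commute_iff_eq, ← mul_kronecker_mul, Matrix.one_mul, Matrix.mul_one]
  have hDX : Commute D X := by
    simp only [hX, hD, commute_iff_eq, ← mul_kronecker_mul, Matrix.one_mul, Matrix.mul_one]
  have hDY : ⁅D, Y⁆ = -Y := by
    rw [hD, hY, lie_one_kronecker, lie_diagonal_nilpotentJordanBlock]
    ext
    simp
  have hDY' : ⁅toLinAlgEquiv' D, toLinAlgEquiv' Y⁆ = -toLinAlgEquiv' Y := by
    rw [← map_neg, ← hDY]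
    simp only [LieRing.of_associative_ring_bracket, map_sub, map_mul]
  obtain ⟨v, hv⟩ := exists_span_sup_range_nilpotentJordanBlock_eq_top (F := F) r s
  rw [hZ, map_add, map_add, map_mul]
  exact (finrank_jordanSpace_add_add_mul_le (hXY.map toLinAlgEquiv') (hDX.map toLinAlgEquiv')
    hDY' hn).trans (finrank_quotient_le_one_of_span_singleton_sup_eq_top hv)

end KroneckerProduct

end JordanKronecker

open JordanKronecker Matrix Module in
theorem stmt_1_general {F : Type*} [Field F] (p : ℕ) [CharP F p] (r s : ℕ)
    {ι : Type} [Fintype ι] [DecidableEq ι] (d : ι → ℕ)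
    (hsim : MatSimilar F (jordanBlock F r ⊗ₖ jordanBlock F s) (jordanBlockDiag F d))
    {x y : ι} (hxy : x ≠ y) (hd : d x = d y) : p ∣ d x := by
  by_contra hp
  obtain ⟨n, hx⟩ := Nat.exists_eq_succ_of_ne_zero fun h : d x = 0 => hp (h ▸ dvd_zero p)
  have hn : ((n + 1 : ℕ) : F) ≠ 0 := fun h => hp (hx ▸ (CharP.cast_eq_zero_iff F p _).1 h)
  obtain ⟨e, he⟩ := hsim
  have hconj : e.conj (toLinAlgEquiv' (jordanBlock F r ⊗ₖ jordanBlock F s - 1)) =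
      toLinAlgEquiv' (jordanBlockDiag F d - 1) := by
    refine LinearMap.ext fun v => ?_
    simp [LinearEquiv.conj_apply_apply, he]
  have hcard : 1 < Fintype.card {z // d z = n + 1} :=
    Fintype.one_lt_card_iff.2 ⟨⟨x, hx⟩, ⟨y, hd ▸ hx⟩, fun h => hxy (congrArg Subtype.val h)⟩
  have hblocks := card_le_finrank_jordanSpace_jordanBlockDiag (F := F) d n
  have hle_one := finrank_jordanSpace_kronecker_le_one (F := F) r s hn
  rw [← hconj, finrank_jordanSpace_conj] at hblocks
  exact (hcard.trans_le (hblocks.trans hle_one)).false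

/-- Every part of the Jordan partition with multiplicity greater than 1 is divisible by `p`. -/
theorem stmt_1 {F : Type*} [Field F] (p : ℕ) (hp : p.Prime) [CharP F p]
    (r s : ℕ) (hr : 0 < r) (hs : 0 < s)
    (t : ℕ) (μ : Fin t → ℕ) (m : Fin t → ℕ)
    (hμ : StrictAnti μ) (hμpos : ∀ i, 0 < μ i) (hm : ∀ i, 1 ≤ m i)
    (hsim : MatSimilar F (jordanBlock F r ⊗ₖ jordanBlock F s)
      (jordanBlockDiag F (fun x : (i : Fin t) × Fin (m i) => μ x.1))) :
    ∀ i : Fin t, 1 < m i → p ∣ μ i := by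
  intro i hi
  exact stmt_1_general p r s _ hsim (x := ⟨i, 0, by omega⟩) (y := ⟨i, 1, hi⟩) (by simp) rfl
end

section
/- Let p be a prime, F a field of characteristic p, and r, s positive integers. Suppose the Kronecker product J_r ⊗ J_s is similar over F to the block-diagonal matrix consisting, for each 1 ≤ i ≤ t, of exactly m_i ≥ 1 diagonal blocks equal to J_{μ_i}, where μ_1 > ⋯ > μ_t > 0. Then for every 1 ≤ i ≤ t one has μ_i = r + s − m_i − 2·Σ_{j=1}^{i−1} m_j. -/
/-!
Let `X` and `Y` be the unit translations of the functions on `ℕ × ℕ` that vanish outside an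
`r × s` rectangle. The matrix `J_r ⊗ J_s - 1` acts as `X + Y * (1 + X)`, and applying `(1 + X) ^ j`
to the `j`-th row turns it into `Z = X + Y`, which lowers the degree `i + j` by one. The dimension
`g k` of `ker Z ∩ im Z ^ k` is the number of Jordan blocks of size greater than `k`. This space is
graded and stable under `X`. Since `ker Z` is spanned by the alternating functions `κ_e`, one in
each degree `e`, and `X κ_(e+1) = κ_e`, it is spanned by the `κ_e` with `e < g k`. Convolution,
evaluated at the corner of the rectangle, is a perfect pairing for which `Z` is self-adjoint.
Hence the degrees `e` with `g (k + 1) ≤ e < g k` are permuted by `e ↦ r + s - 2 - k - e`, so that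
`g k + g (k + 1) = r + s - 1 - k` whenever some block has size `k + 1`.
-/

open Kronecker

namespace JordanTensor

section Supported

variable {R α β : Type*} [Semiring R]

/-- The functions `α → R` that vanish outside `S`. -/
def supported (R : Type*) [Semiring R] {α : Type*} (S : Set α) : Submodule R (α → R) :=
  Submodule.pi Sᶜ fun _ => ⊥

lemma mem_supported {S : Set α} {φ : α → R} : φ ∈ supported R S ↔ ∀ a ∉ S, φ a = 0 := by
  simp [supported]

lemma extendByZero_comp {f : α → β} (hf : f.Injective) {φ : β → R}
    (hφ : φ ∈ supported R (Set.range f)) :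
    Function.ExtendByZero.linearMap R f (φ ∘ f) = φ := by
  funext b
  change Function.extend f (φ ∘ f) 0 b = φ b
  by_cases hb : b ∈ Set.range f
  · obtain ⟨a, rfl⟩ := hb
    exact hf.extend_apply _ _ _
  · rw [Function.extend_apply' _ _ _ hb, mem_supported.1 hφ b hb, Pi.zero_apply]

lemma extendByZero_mem_supported (f : α → β) (v : α → R) :
    Function.ExtendByZero.linearMap R f v ∈ supported R (Set.range f) :=
  mem_supported.2 fun b hb => Function.extend_apply' _ _ b hb

lemma comp_extendByZero {f : α → β} (hf : f.Injective) (v : α → R) :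
    Function.ExtendByZero.linearMap R f v ∘ f = v :=
  funext fun a => hf.extend_apply v 0 a

lemma extendByZero_injective {f : α → β} (hf : f.Injective) :
    Function.Injective (Function.ExtendByZero.linearMap R f) :=
  Function.LeftInverse.injective (g := (· ∘ f)) (comp_extendByZero hf)

lemma range_extendByZero {f : α → β} (hf : f.Injective) :
    LinearMap.range (Function.ExtendByZero.linearMap R f) = supported R (Set.range f) := by
  refine le_antisymm ?_ fun φ hφ => ⟨φ ∘ f, extendByZero_comp hf hφ⟩
  rintro _ ⟨v, rfl⟩
  exact extendByZero_mem_supported f v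

lemma finrank_supported [StrongRankCondition R] (S : Set α) [Finite S] :
    Module.finrank R (supported R S) = Nat.card S := by
  have := Fintype.ofFinite S
  rw [← Subtype.range_coe (s := S), ← range_extendByZero Subtype.val_injective,
    LinearMap.finrank_range_of_inj (extendByZero_injective Subtype.val_injective),
    Module.finrank_fintype_fun_eq_card, Subtype.range_coe, Nat.card_eq_fintype_card]

lemma extendByZero_mulVec {R : Type*} [CommSemiring R] [Fintype α] {f : α → β} (hf : f.Injective)
    {A : Matrix α α R} {g : Module.End R (β → R)}
    (hg : ∀ φ ∈ supported R (Set.range f), g φ ∈ supported R (Set.range f))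
    (hA : ∀ φ ∈ supported R (Set.range f), A.mulVec (φ ∘ f) = g φ ∘ f) (v : α → R) :
    Function.ExtendByZero.linearMap R f (A.mulVec v) =
      g (Function.ExtendByZero.linearMap R f v) := by
  have hv := extendByZero_mem_supported f v
  rw [← extendByZero_comp hf (hg _ hv), ← hA _ hv, comp_extendByZero hf]

end Supported

section SocleFiltration

variable {R U V : Type*} [CommRing R] [AddCommGroup U] [Module R U] [AddCommGroup V] [Module R V]

/-- The submodule `ker f ∩ f ^ k W`. For nilpotent `f` and `W` the whole space, its dimension is
the number of Jordan blocks of `f` of size greater than `k`. -/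
def socleFiltration (f : Module.End R V) (W : Submodule R V) (k : ℕ) : Submodule R V :=
  LinearMap.ker f ⊓ W.map (f ^ k)

lemma mem_socleFiltration {f : Module.End R V} {W : Submodule R V} {k : ℕ} {v : V} :
    v ∈ socleFiltration f W k ↔ f v = 0 ∧ ∃ w ∈ W, (f ^ k) w = v := by
  simp [socleFiltration]

lemma map_socleFiltration {f : Module.End R U} {g : Module.End R V} {Φ : U →ₗ[R] V}
    (hΦ : Function.Injective Φ) (hcomm : g ∘ₗ Φ = Φ ∘ₗ f) (W : Submodule R U) (k : ℕ) :
    (socleFiltration f W k).map Φ = socleFiltration g (W.map Φ) k := by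
  have hker : LinearMap.ker f = (LinearMap.ker g).comap Φ := by
    rw [← LinearMap.ker_comp, hcomm, LinearMap.ker_comp_of_ker_eq_bot _ (LinearMap.ker_eq_bot.2 hΦ)]
  rw [socleFiltration, socleFiltration, ← Submodule.map_comp,
    Module.End.commute_pow_left_of_commute hcomm, Submodule.map_comp, hker]
  exact SetLike.coe_injective (Set.image_preimage_inter Φ (W.map (f ^ k)) (LinearMap.ker g))

lemma finrank_socleFiltration_map {f : Module.End R U} {g : Module.End R V} {Φ : U →ₗ[R] V}
    (hΦ : Function.Injective Φ) (hcomm : g ∘ₗ Φ = Φ ∘ₗ f) (W : Submodule R U) (k : ℕ) :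
    Module.finrank R (socleFiltration g (W.map Φ) k) =
      Module.finrank R (socleFiltration f W k) := by
  rw [← map_socleFiltration hΦ hcomm]
  exact (Submodule.equivMapOfInjective Φ hΦ _).finrank_eq.symm

lemma finrank_socleFiltration_mulVecLin_sub_one {n : Type*} [Fintype n] {A : Matrix n n R}
    {g : Module.End R V} {Φ : (n → R) →ₗ[R] V} (hΦ : Function.Injective Φ)
    (hA : ∀ v, Φ (A.mulVec v) = Φ v + g (Φ v)) (k : ℕ) :
    Module.finrank R (socleFiltration (A.mulVecLin - 1) ⊤ k) =
      Module.finrank R (socleFiltration g (LinearMap.range Φ) k) := by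
  rw [LinearMap.range_eq_map]
  refine (finrank_socleFiltration_map hΦ (LinearMap.ext fun v => ?_) ⊤ k).symm
  simp [hA]

end SocleFiltration

lemma finrank_socleFiltration_eq_of_matSimilar {F n m : Type*} [Field F] [Fintype n]
    [Fintype m] {A : Matrix n n F} {B : Matrix m m F} (h : MatSimilar F A B) (k : ℕ) :
    Module.finrank F (socleFiltration (A.mulVecLin - 1) ⊤ k) =
      Module.finrank F (socleFiltration (B.mulVecLin - 1) ⊤ k) := by
  obtain ⟨e, he⟩ := h
  rw [finrank_socleFiltration_mulVecLin_sub_one (Φ := e.toLinearMap) e.injective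
    (g := B.mulVecLin - 1) (by simp [he]), LinearEquiv.range]

section FiberShift

variable {R ι : Type*} [Semiring R]

/-- The shift of the second coordinate of functions on `ι × ℕ`, which is the nilpotent part of
a sum of Jordan blocks indexed by `ι`. -/
def fiberShift (R ι : Type*) [Semiring R] : Module.End R (ι × ℕ → R) :=
  LinearMap.funLeft R R (Prod.map id Nat.succ)

lemma fiberShift_apply (φ : ι × ℕ → R) (x : ι) (i : ℕ) :
    fiberShift R ι φ (x, i) = φ (x, i + 1) := rfl

lemma fiberShift_pow_apply (k : ℕ) (φ : ι × ℕ → R) (x : ι) (i : ℕ) :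
    (fiberShift R ι ^ k) φ (x, i) = φ (x, i + k) := by
  induction k generalizing i with
  | zero => rfl
  | succ k ih =>
    rw [pow_succ', Module.End.mul_apply]
    exact (ih (i + 1)).trans (by rw [add_right_comm, add_assoc])

lemma socleFiltration_fiberShift {R : Type*} [CommRing R] (d : ι → ℕ) (k : ℕ) :
    socleFiltration (fiberShift R ι) (supported R {x | x.2 < d x.1}) k =
      supported R {x | x.2 = 0 ∧ k < d x.1} := by
  ext φ
  simp only [mem_socleFiltration, mem_supported, Set.mem_ofPred_eq, Prod.forall]
  constructor
  · rintro ⟨h0, ψ, hψ, rfl⟩ x (_ | i) h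
    · rw [fiberShift_pow_apply, hψ x (0 + k) (by omega)]
    · exact congrFun h0 (x, i)
  · intro hφ
    refine ⟨funext fun ⟨x, i⟩ => hφ x (i + 1) (by simp), fun x => if k ≤ x.2 then
      φ (x.1, x.2 - k) else 0, fun x i h => ?_, funext fun ⟨x, i⟩ => ?_⟩
    · dsimp only
      split_ifs with hk
      · exact hφ x (i - k) (by omega)
      · rfl
    · simp [fiberShift_pow_apply]

end FiberShift

section JordanBlocks

lemma jordanBlock_mulVec {R : Type*} [NonAssocSemiring R] {m : ℕ} {φ : ℕ → R} (hφ : φ m = 0)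
    (i : Fin m) : (jordanBlock R m).mulVec (fun j => φ j) i = φ i + φ (i + 1) := by
  have hterm (j : ℕ) : (if j = (i : ℕ) ∨ j = i + 1 then 1 else 0) * φ j =
      (if j = (i : ℕ) then φ j else 0) + if j = i + 1 then φ j else 0 := by
    by_cases h : j = (i : ℕ) <;> simp [h]
  calc
    _ = ∑ j : Fin m, (if (j : ℕ) = i ∨ (j : ℕ) = i + 1 then 1 else 0) * φ j := rfl
    _ = ∑ j ∈ Finset.range (m + 1), (if j = (i : ℕ) ∨ j = i + 1 then 1 else 0) * φ j := by
      rw [Finset.sum_range_succ, hφ, mul_zero, add_zero]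
      exact Fin.sum_univ_eq_sum_range
        (fun j => (if j = (i : ℕ) ∨ j = i + 1 then 1 else 0) * φ j) m
    _ = φ i + φ (i + 1) := by
      simp [hterm, Finset.sum_add_distrib, i.is_lt, Nat.lt_succ_of_lt i.is_lt]

lemma sigmaVal_injective {ι : Type*} (d : ι → ℕ) :
    Function.Injective fun x : (i : ι) × Fin (d i) => (x.1, (x.2 : ℕ)) := by
  rintro ⟨x, i⟩ ⟨y, j⟩ h
  obtain rfl : x = y := congrArg Prod.fst h
  exact congrArg _ (Fin.ext (congrArg Prod.snd h))

lemma range_sigmaVal {ι : Type*} (d : ι → ℕ) :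
    Set.range (fun x : (i : ι) × Fin (d i) => (x.1, (x.2 : ℕ))) = {x | x.2 < d x.1} := by
  ext ⟨x, i⟩
  constructor
  · rintro ⟨⟨y, j⟩, h⟩
    obtain ⟨rfl, rfl⟩ := Prod.mk.inj h
    exact j.is_lt
  · exact fun h => ⟨⟨x, i, h⟩, rfl⟩

variable {F : Type*} [Field F] {ι : Type} [Fintype ι] [DecidableEq ι] (d : ι → ℕ)

lemma jordanBlockDiag_mulVec_apply (w : ((x : ι) × Fin (d x)) → F) (x : ι) (i : Fin (d x)) :
    (jordanBlockDiag F d).mulVec w ⟨x, i⟩ =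
      (jordanBlock F (d x)).mulVec (fun j => w ⟨x, j⟩) i := by
  simp only [Matrix.mulVec, dotProduct, jordanBlockDiag, Fintype.sum_sigma]
  rw [Fintype.sum_eq_single x fun y hy => Finset.sum_eq_zero fun j _ => by
    rw [Matrix.blockDiagonal'_apply_ne _ _ _ hy.symm, zero_mul]]
  simp only [Matrix.blockDiagonal'_apply_eq]

lemma extendByZero_jordanBlockDiag_mulVec (w : ((x : ι) × Fin (d x)) → F) :
    Function.ExtendByZero.linearMap F (fun x : (i : ι) × Fin (d i) => (x.1, (x.2 : ℕ)))
        ((jordanBlockDiag F d).mulVec w) =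
      (1 + fiberShift F ι) (Function.ExtendByZero.linearMap F (fun x => (x.1, (x.2 : ℕ))) w) := by
  apply extendByZero_mulVec (sigmaVal_injective d) <;>
    simp only [range_sigmaVal, mem_supported, Set.mem_ofPred_eq, Prod.forall]
  · intro φ hφ x i hi
    simp [fiberShift_apply, hφ x i hi, hφ x (i + 1) (by omega)]
  · intro φ hφ
    funext ⟨x, i⟩
    rw [jordanBlockDiag_mulVec_apply]
    exact jordanBlock_mulVec (φ := fun j => φ (x, j)) (hφ x (d x) (lt_irrefl _)) i

lemma finrank_socleFiltration_jordanBlockDiag (k : ℕ) :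
    Module.finrank F (socleFiltration ((jordanBlockDiag F d).mulVecLin - 1) ⊤ k) =
      Fintype.card {x // k < d x} := by
  have hbottoms : {x : ι × ℕ | x.2 = 0 ∧ k < d x.1} =
      Set.range fun x : {x // k < d x} => (x.1, 0) := by
    ext ⟨x, i⟩
    simp [and_comm, eq_comm]
  rw [finrank_socleFiltration_mulVecLin_sub_one (extendByZero_injective (sigmaVal_injective d))
      (extendByZero_jordanBlockDiag_mulVec d), range_extendByZero (sigmaVal_injective d),
    range_sigmaVal, socleFiltration_fiberShift, hbottoms, finrank_supported,
    Nat.card_range_of_injective fun x y h => Subtype.ext (Prod.mk.inj h).1,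
    Nat.card_eq_fintype_card]

end JordanBlocks

section Translate

variable {R M : Type*} [CommRing R] [AddCommMonoid M]

/-- The translation `(τ_a φ)(x) = φ(x + a)` of functions on a monoid. -/
def translate (R : Type*) [CommRing R] {M : Type*} [AddCommMonoid M] (a : M) :
    Module.End R (M → R) :=
  LinearMap.funLeft R R (· + a)

@[simp]
lemma translate_apply (a : M) (φ : M → R) (x : M) : translate R a φ x = φ (x + a) := rfl

lemma translate_commute (a b : M) : Commute (translate R a) (translate R b) :=
  LinearMap.ext fun φ => funext fun x => congrArg φ (add_right_comm x a b)

lemma translate_mem_supported [Preorder M] [CanonicallyOrderedAdd M] {S : Set M}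
    (hS : IsLowerSet S) (a : M) {φ : M → R} (hφ : φ ∈ supported R S) :
    translate R a φ ∈ supported R S :=
  mem_supported.2 fun _ hx => mem_supported.1 hφ _ fun h => hx (hS le_self_add h)

end Translate

section ConvForm

variable {R M : Type*} [CommRing R] [PartialOrder M] [LocallyFiniteOrderBot M] [Sub M]

/-- The bilinear form `∑ θ(x) ψ(n - x)`, the sum being over `x ≤ n`. It is the value at `n` of the
convolution of `θ` and `ψ`. -/
def convForm (R : Type*) [CommRing R] {M : Type*} [PartialOrder M] [LocallyFiniteOrderBot M]
    [Sub M] (n : M) : LinearMap.BilinForm R (M → R) :=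
  LinearMap.mk₂ R (fun θ ψ => ∑ x ∈ Finset.Iic n, θ x * ψ (n - x))
    (by simp [add_mul, Finset.sum_add_distrib]) (by simp [mul_assoc, Finset.mul_sum])
    (by simp [mul_add, Finset.sum_add_distrib]) (by simp [mul_left_comm, Finset.mul_sum])

lemma convForm_apply (n : M) (θ ψ : M → R) :
    convForm R n θ ψ = ∑ x ∈ Finset.Iic n, θ x * ψ (n - x) := rfl

lemma convForm_pow {n : M} {f : Module.End R (M → R)}
    (hf : ∀ φ ∈ supported R (Set.Iic n), f φ ∈ supported R (Set.Iic n))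
    (hadj : ∀ θ ∈ supported R (Set.Iic n), ∀ ψ ∈ supported R (Set.Iic n),
      convForm R n (f θ) ψ = convForm R n θ (f ψ)) (k : ℕ) {θ ψ : M → R}
    (hθ : θ ∈ supported R (Set.Iic n)) (hψ : ψ ∈ supported R (Set.Iic n)) :
    convForm R n ((f ^ k) θ) ψ = convForm R n θ ((f ^ k) ψ) := by
  induction k generalizing θ with
  | zero => rfl
  | succ k ih =>
    rw [pow_succ, Module.End.mul_apply, ih (hf θ hθ), hadj θ hθ _
      (Submodule.le_comap_pow_of_le_comap _ hf k hψ), ← Module.End.mul_apply, ← pow_succ', pow_succ]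

lemma convForm_single [DecidableEq M] {n x : M} (hx : x ≤ n) (c : R) (ψ : M → R) :
    convForm R n (Pi.single x c) ψ = c * ψ (n - x) := by
  rw [convForm_apply, Finset.sum_eq_single x (fun y _ hy => by simp [hy])
    (fun h => absurd (Finset.mem_Iic.2 hx) h), Pi.single_eq_same]

variable [AddCommMonoid M] [IsOrderedCancelAddMonoid M] [CanonicallyOrderedAdd M] [OrderedSub M]

lemma convForm_translate {n : M} {θ ψ : M → R}
    (hθ : θ ∈ supported R (Set.Iic n)) (hψ : ψ ∈ supported R (Set.Iic n)) (a : M) :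
    convForm R n (translate R a θ) ψ = convForm R n θ (translate R a ψ) := by
  rw [mem_supported] at hθ hψ
  simp only [convForm_apply, translate_apply]
  refine Finset.sum_bij_ne_zero (fun x _ _ => x + a) (fun x _ hx => ?_)
    (fun _ _ _ _ _ _ h => add_right_cancel h) (fun y hy hne => ?_) (fun x _ hx => ?_)
  · exact Finset.mem_Iic.2 (not_imp_comm.1 (hθ _) (left_ne_zero_of_mul hx))
  · rw [Finset.mem_Iic] at hy
    have hle : n - y + a ≤ n := not_imp_comm.1 (hψ _) (right_ne_zero_of_mul hne)
    have hay : a ≤ y := by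
      rw [← add_le_add_iff_left (n - y), tsub_add_cancel_of_le hy]
      exact hle
    refine ⟨y - a, Finset.mem_Iic.2 (tsub_le_self.trans hy), ?_, tsub_add_cancel_of_le hay⟩
    rwa [tsub_add_cancel_of_le hay, tsub_tsub_assoc hy hay]
  · have hxa : x + a ≤ n := not_imp_comm.1 (hθ _) (left_ne_zero_of_mul hx)
    rw [← tsub_tsub, tsub_add_cancel_of_le (le_tsub_of_add_le_left hxa)]

open Classical in
lemma eq_zero_of_forall_convForm_eq_zero {n : M} {ψ : M → R} (hψ : ψ ∈ supported R (Set.Iic n))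
    (h : ∀ θ ∈ supported R (Set.Iic n), convForm R n θ ψ = 0) : ψ = 0 := by
  funext x
  by_cases hx : x ≤ n
  · have hmem : Pi.single (n - x) (1 : R) ∈ supported R (Set.Iic n) :=
      mem_supported.2 fun y hy => Pi.single_eq_of_ne (fun h => hy (by rw [h]; exact tsub_le_self)) _
    simpa [convForm_single tsub_le_self, tsub_tsub_cancel_of_le hx] using h _ hmem
  · exact mem_supported.1 hψ x hx

open Classical in
lemma exists_convForm_eq (n : M) (l : Module.Dual R (M → R)) :
    ∃ ψ ∈ supported R (Set.Iic n), ∀ θ ∈ supported R (Set.Iic n), convForm R n θ ψ = l θ := by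
  refine ⟨(Set.Iic n).indicator fun x => l (Pi.single (n - x) 1),
    mem_supported.2 fun x hx => Set.indicator_of_notMem hx _, fun θ hθ => ?_⟩
  have hsum : θ = ∑ x ∈ Finset.Iic n, θ x • Pi.single x (1 : R) := by
    funext y
    by_cases hy : y ≤ n <;> simp [Pi.single_apply, hy, mem_supported.1 hθ y]
  conv_rhs => rw [hsum, map_sum]
  refine Finset.sum_congr rfl fun x hx => ?_
  rw [Set.indicator_of_mem (show n - x ∈ Set.Iic n from tsub_le_self),
    tsub_tsub_cancel_of_le (Finset.mem_Iic.1 hx), map_smul, smul_eq_mul]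

lemma exists_ker_convForm_ne_zero {F : Type*} [Field F] {n : M} {f : Module.End F (M → F)}
    (hf : ∀ φ ∈ supported F (Set.Iic n), f φ ∈ supported F (Set.Iic n))
    (hadj : ∀ θ ∈ supported F (Set.Iic n), ∀ ψ ∈ supported F (Set.Iic n),
      convForm F n (f θ) ψ = convForm F n θ (f ψ)) {v : M → F}
    (hv : v ∈ supported F (Set.Iic n)) (hnot : v ∉ (supported F (Set.Iic n)).map f) :
    ∃ ψ ∈ supported F (Set.Iic n), f ψ = 0 ∧ convForm F n v ψ ≠ 0 := by
  obtain ⟨l, hlv, hl⟩ := Submodule.exists_le_ker_of_notMem hnot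
  obtain ⟨ψ, hψ, hrepr⟩ := exists_convForm_eq n l
  refine ⟨ψ, hψ, eq_zero_of_forall_convForm_eq_zero (hf ψ hψ) fun θ hθ => ?_, ?_⟩
  · rw [← hadj θ hθ ψ hψ, hrepr _ (hf θ hθ)]
    exact hl (Submodule.mem_map_of_mem hθ)
  · rwa [hrepr v hv]

end ConvForm

section Single

variable {R α : Type*} [Semiring R]

lemma single_mem_supported_iff [DecidableEq α] [Nontrivial R] {S : Set α} {a : α} :
    Pi.single a (1 : R) ∈ supported R S ↔ a ∈ S := by
  refine ⟨fun h => by_contra fun ha => one_ne_zero (α := R) ?_, fun h => mem_supported.2 ?_⟩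
  · simpa using mem_supported.1 h a ha
  · rintro b hb
    exact Pi.single_eq_of_ne (ne_of_mem_of_not_mem h hb).symm _

lemma eq_supported_of_single_mem {F : Type*} [Field F] [DecidableEq α] {T : Submodule F (α → F)}
    {S : Set α} (hS : S.Finite) (hT : T ≤ supported F S)
    (hsingle : ∀ φ ∈ T, ∀ a, Pi.single a (φ a) ∈ T) :
    T = supported F {a | Pi.single a (1 : F) ∈ T} := by
  ext φ
  rw [mem_supported]
  have hsmul (a : α) : Pi.single a (φ a) = φ a • Pi.single a (1 : F) := by
    rw [← Pi.single_smul', smul_eq_mul, mul_one]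
  refine ⟨fun hφ a ha => by_contra fun h => ha ?_, fun hφ => ?_⟩
  · have hmem := hsingle φ hφ a
    rwa [hsmul, T.smul_mem_iff h] at hmem
  · have hsum : φ = ∑ a ∈ hS.toFinset, φ a • Pi.single a (1 : F) := by
      funext b
      by_cases hb : b ∈ S
      · simp [Pi.single_apply, hb]
      · simp [Pi.single_apply, hb, hφ b fun h => hb (single_mem_supported_iff.1 (hT h))]
    rw [hsum]
    refine sum_mem fun a _ => ?_
    by_cases ha : Pi.single a (1 : F) ∈ T
    · exact T.smul_mem _ ha
    · simp [hφ a ha]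

lemma eq_supported_Iio_finrank {F : Type*} [Field F] {T : Submodule F (ℕ → F)} {r : ℕ}
    (hT : T ≤ supported F (Set.Iio r)) (hsingle : ∀ a ∈ T, ∀ e, Pi.single e (a e) ∈ T)
    (htranslate : ∀ a ∈ T, translate F 1 a ∈ T) :
    T = supported F (Set.Iio (Module.finrank F T)) := by
  have hsupp := eq_supported_of_single_mem (Set.finite_Iio r) hT hsingle
  have hlower : IsLowerSet {e | Pi.single e (1 : F) ∈ T} := by
    intro e' e hle he
    induction hle using Nat.decreasingInduction with
    | self => exact he
    | of_succ e _ ih =>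
      have hsucc : translate F 1 (Pi.single (e + 1) (1 : F)) = Pi.single e 1 := by
        funext x
        simp [Pi.single_apply]
      rw [Set.mem_ofPred_eq, ← hsucc]
      exact htranslate _ ih
  obtain huniv | ⟨g, hg⟩ := hlower.eq_univ_or_Iio
  · have hr : r ∈ {e | Pi.single e (1 : F) ∈ T} := huniv ▸ Set.mem_univ r
    exact absurd (single_mem_supported_iff.1 (hT hr)) (lt_irrefl r)
  · rw [hg] at hsupp
    rw [hsupp, finrank_supported]
    simp

end Single

section SumShift

variable {R : Type*} [CommRing R]

/-- The sum of the two unit translations of functions on `ℕ × ℕ`. It lowers the degree `i + j`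
by one. -/
def sumShift (R : Type*) [CommRing R] : Module.End R (ℕ × ℕ → R) :=
  translate R (1, 0) + translate R (0, 1)

lemma sumShift_apply (φ : ℕ × ℕ → R) (i j : ℕ) :
    sumShift R φ (i, j) = φ (i + 1, j) + φ (i, j + 1) := rfl

lemma sumShift_commute_translate (a : ℕ × ℕ) : Commute (sumShift R) (translate R a) :=
  (translate_commute _ _).add_left (translate_commute _ _)

lemma sumShift_mem_supported {S : Set (ℕ × ℕ)} (hS : IsLowerSet S) {φ : ℕ × ℕ → R}
    (hφ : φ ∈ supported R S) : sumShift R φ ∈ supported R S :=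
  add_mem (translate_mem_supported hS _ hφ) (translate_mem_supported hS _ hφ)

lemma map_sumShift_pow_le {S : Set (ℕ × ℕ)} (hS : IsLowerSet S) (k : ℕ) :
    (supported R S).map (sumShift R ^ k) ≤ supported R S :=
  Submodule.map_le_iff_le_comap.2 <|
    Submodule.le_comap_pow_of_le_comap _ (fun _ hφ => sumShift_mem_supported hS hφ) k

lemma convForm_sumShift {n : ℕ × ℕ} {θ ψ : ℕ × ℕ → R} (hθ : θ ∈ supported R (Set.Iic n))
    (hψ : ψ ∈ supported R (Set.Iic n)) :
    convForm R n (sumShift R θ) ψ = convForm R n θ (sumShift R ψ) := by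
  simp only [sumShift, LinearMap.add_apply, map_add, convForm_translate hθ hψ]

lemma convForm_sumShift_pow {n : ℕ × ℕ} (k : ℕ) {θ ψ : ℕ × ℕ → R}
    (hθ : θ ∈ supported R (Set.Iic n)) (hψ : ψ ∈ supported R (Set.Iic n)) :
    convForm R n ((sumShift R ^ k) θ) ψ = convForm R n θ ((sumShift R ^ k) ψ) :=
  convForm_pow (fun _ hφ => sumShift_mem_supported (isLowerSet_Iic n) hφ)
    (fun _ hθ _ hψ => convForm_sumShift hθ hψ) k hθ hψ

/-- The component of degree `e` of a function on `ℕ × ℕ`, where `(i, j)` has degree `i + j`. -/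
def homogeneousComponent (e : ℕ) (φ : ℕ × ℕ → R) : ℕ × ℕ → R :=
  fun x => if x.1 + x.2 = e then φ x else 0

lemma homogeneousComponent_apply (e : ℕ) (φ : ℕ × ℕ → R) (i j : ℕ) :
    homogeneousComponent e φ (i, j) = if i + j = e then φ (i, j) else 0 := rfl

lemma homogeneousComponent_mem_supported {S : Set (ℕ × ℕ)} {φ : ℕ × ℕ → R}
    (hφ : φ ∈ supported R S) (e : ℕ) : homogeneousComponent e φ ∈ supported R S :=
  mem_supported.2 fun x hx => ite_eq_right_iff.2 fun _ => mem_supported.1 hφ x hx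

lemma homogeneousComponent_eq_zero {n : ℕ × ℕ} {φ : ℕ × ℕ → R}
    (hφ : φ ∈ supported R (Set.Iic n)) {e : ℕ} (he : n.1 + n.2 < e) :
    homogeneousComponent e φ = 0 := by
  funext ⟨i, j⟩
  rw [homogeneousComponent_apply, Pi.zero_apply, ite_eq_right_iff]
  rintro rfl
  exact mem_supported.1 hφ _ fun h => he.not_ge (add_le_add h.1 h.2)

lemma homogeneousComponent_sumShift_pow (e k : ℕ) (φ : ℕ × ℕ → R) :
    homogeneousComponent e ((sumShift R ^ k) φ) =
      (sumShift R ^ k) (homogeneousComponent (e + k) φ) := by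
  induction k generalizing e with
  | zero => rfl
  | succ k ih =>
    rw [pow_succ', Module.End.mul_apply, Module.End.mul_apply, ← add_assoc, add_right_comm, ← ih]
    funext ⟨i, j⟩
    simp only [homogeneousComponent_apply, sumShift_apply, ← add_assoc, add_right_comm i 1 j,
      add_left_inj]
    split_ifs <;> simp

lemma homogeneousComponent_mem_map_sumShift_pow {S : Set (ℕ × ℕ)} {k : ℕ} {φ : ℕ × ℕ → R}
    (hφ : φ ∈ (supported R S).map (sumShift R ^ k)) (e : ℕ) :
    homogeneousComponent e φ ∈ (supported R S).map (sumShift R ^ k) := by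
  obtain ⟨θ, hθ, rfl⟩ := hφ
  rw [homogeneousComponent_sumShift_pow]
  exact Submodule.mem_map_of_mem (homogeneousComponent_mem_supported hθ _)

lemma convForm_homogeneousComponent {n : ℕ × ℕ} {e e' : ℕ} (h : e + e' = n.1 + n.2)
    (θ ψ : ℕ × ℕ → R) :
    convForm R n (homogeneousComponent e θ) ψ = convForm R n θ (homogeneousComponent e' ψ) := by
  obtain ⟨a, b⟩ := n
  refine Finset.sum_congr rfl fun ⟨i, j⟩ hij => ?_
  obtain ⟨hi, hj⟩ : i ≤ a ∧ j ≤ b := by simpa using hij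
  have hdegree : a - i + (b - j) = e' ↔ i + j = e := by omega
  simp only [Prod.mk_sub_mk, homogeneousComponent_apply, hdegree, ite_mul, mul_ite, zero_mul,
    mul_zero]

end SumShift

section Alternating

variable {R : Type*} [CommRing R]

/-- The function `(i, j) ↦ (-1) ^ j * a (i + j)` attached to a sequence `a`. These functions make
up the kernel of `sumShift`. -/
def alternating (R : Type*) [CommRing R] : (ℕ → R) →ₗ[R] (ℕ × ℕ → R) :=
  LinearMap.pi fun x => (-1 : R) ^ x.2 • LinearMap.proj (x.1 + x.2)

lemma alternating_apply (a : ℕ → R) (i j : ℕ) :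
    alternating R a (i, j) = (-1) ^ j * a (i + j) := rfl

lemma alternating_injective : Function.Injective (alternating R) := by
  intro a b h
  funext e
  simpa [alternating_apply] using congrFun h (e, 0)

lemma ker_sumShift : LinearMap.ker (sumShift R) = LinearMap.range (alternating R) := by
  ext φ
  constructor
  · refine fun hφ => ⟨fun e => φ (e, 0), funext fun ⟨i, j⟩ => ?_⟩
    induction j generalizing i with
    | zero => simp [alternating_apply]
    | succ j ih =>
      have hstep : φ (i + 1, j) + φ (i, j + 1) = 0 := congrFun hφ (i, j)
      rw [eq_neg_of_add_eq_zero_right hstep, ← ih (i + 1), alternating_apply, alternating_apply,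
        add_right_comm, add_assoc, pow_succ]
      ring
  · rintro ⟨a, rfl⟩
    refine funext fun ⟨i, j⟩ => ?_
    rw [sumShift_apply, alternating_apply, alternating_apply, add_right_comm, add_assoc, pow_succ]
    simp

lemma translate_alternating (a : ℕ → R) :
    translate R (1, 0) (alternating R a) = alternating R (translate R 1 a) :=
  funext fun ⟨i, j⟩ => by simp [alternating_apply, add_right_comm]

lemma homogeneousComponent_alternating (e : ℕ) (a : ℕ → R) :
    homogeneousComponent e (alternating R a) = alternating R (Pi.single e (a e)) := by
  funext ⟨i, j⟩
  rw [homogeneousComponent_apply, alternating_apply, alternating_apply, Pi.single_apply]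
  split_ifs with h <;> simp [h]

lemma alternating_single (e : ℕ) (c : R) :
    alternating R (Pi.single e c) = c • alternating R (Pi.single e 1) := by
  rw [← map_smul, ← Pi.single_smul', smul_eq_mul, mul_one]

lemma sumShift_alternating (a : ℕ → R) : sumShift R (alternating R a) = 0 := by
  rw [← LinearMap.mem_ker, ker_sumShift]
  exact LinearMap.mem_range_self _ a

end Alternating

section SocleOfRectangle

variable {F : Type*} [Field F] {n : ℕ × ℕ} {k e : ℕ}

lemma alternating_single_mem_map_iff :
    alternating F (Pi.single e 1) ∈ (supported F (Set.Iic n)).map (sumShift F ^ k) ↔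
      e < Module.finrank F (socleFiltration (sumShift F) (supported F (Set.Iic n)) k) := by
  set W := (supported F (Set.Iic n)).map (sumShift F ^ k)
  have hfinrank : Module.finrank F (W.comap (alternating F)) =
      Module.finrank F (socleFiltration (sumShift F) (supported F (Set.Iic n)) k) := by
    rw [socleFiltration, ker_sumShift, ← Submodule.map_comap_eq]
    exact (Submodule.equivMapOfInjective (alternating F) alternating_injective _).finrank_eq
  have hbound : W.comap (alternating F) ≤ supported F (Set.Iio (n.1 + 1)) := by
    refine fun a ha => mem_supported.2 fun e he => ?_
    simpa [alternating_apply] using mem_supported.1 (map_sumShift_pow_le (isLowerSet_Iic n) k ha)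
      (e, 0) fun h => he (Nat.lt_succ_of_le h.1)
  have hsupp := eq_supported_Iio_finrank hbound
    (fun a ha e => ?_) (fun a ha => ?_)
  · rw [← Submodule.mem_comap, hsupp, single_mem_supported_iff, Set.mem_Iio, hfinrank]
  · rw [Submodule.mem_comap, ← homogeneousComponent_alternating]
    exact homogeneousComponent_mem_map_sumShift_pow ha e
  · obtain ⟨θ, hθ, hθa⟩ := ha
    refine ⟨translate F (1, 0) θ, translate_mem_supported (isLowerSet_Iic n) _ hθ, ?_⟩
    rw [← translate_alternating, ← hθa, ← Module.End.mul_apply, ← Module.End.mul_apply,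
      ((sumShift_commute_translate (1, 0)).pow_left k).eq]

lemma exists_reflected_degree
    (hmem : alternating F (Pi.single e 1) ∈ (supported F (Set.Iic n)).map (sumShift F ^ k))
    (hnot : alternating F (Pi.single e 1) ∉
      (supported F (Set.Iic n)).map (sumShift F ^ (k + 1))) :
    ∃ e', e + e' + k = n.1 + n.2 ∧
      alternating F (Pi.single e' 1) ∈ (supported F (Set.Iic n)).map (sumShift F ^ k) ∧
      alternating F (Pi.single e' 1) ∉ (supported F (Set.Iic n)).map (sumShift F ^ (k + 1)) := by
  have hκ := map_sumShift_pow_le (isLowerSet_Iic n) k hmem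
  obtain ⟨ψ, hψ, hkerψ, hne⟩ := exists_ker_convForm_ne_zero
    (fun _ hφ => map_sumShift_pow_le (isLowerSet_Iic n) _ (Submodule.mem_map_of_mem hφ))
    (fun _ hθ _ hψ => convForm_sumShift_pow (k + 1) hθ hψ) hκ hnot
  obtain ⟨φ, hφ, hφκ⟩ := hmem
  have hcomp : (sumShift F ^ k) (homogeneousComponent (e + k) φ) =
      alternating F (Pi.single e 1) := by
    rw [← homogeneousComponent_sumShift_pow, hφκ, homogeneousComponent_alternating,
      Pi.single_eq_same]
  have hle : e + k ≤ n.1 + n.2 := not_lt.1 fun hlt => hne <| by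
    rw [← hcomp, homogeneousComponent_eq_zero hφ hlt, map_zero, map_zero, LinearMap.zero_apply]
  obtain ⟨e', he'⟩ := Nat.exists_eq_add_of_le hle
  obtain ⟨a, ha⟩ : (sumShift F ^ k) ψ ∈ LinearMap.range (alternating F) := by
    rw [← ker_sumShift, LinearMap.mem_ker, ← Module.End.mul_apply, ← pow_succ', hkerψ]
  have hpair : a e' * convForm F n φ (alternating F (Pi.single e' 1)) ≠ 0 := by
    rwa [← hcomp, convForm_sumShift_pow k (homogeneousComponent_mem_supported hφ _) hψ, ← ha,
      convForm_homogeneousComponent he'.symm, homogeneousComponent_alternating, alternating_single,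
      map_smul, smul_eq_mul] at hne
  refine ⟨e', by omega, ?_, fun ⟨θ, hθ, hθκ⟩ => right_ne_zero_of_mul hpair ?_⟩
  · rw [← Submodule.smul_mem_iff _ (left_ne_zero_of_mul hpair), ← alternating_single,
      ← homogeneousComponent_alternating, ha]
    exact homogeneousComponent_mem_map_sumShift_pow (Submodule.mem_map_of_mem hψ) e'
  · rw [← hθκ, ← convForm_sumShift_pow (k + 1) hφ hθ, pow_succ', Module.End.mul_apply, hφκ,
      sumShift_alternating, map_zero, LinearMap.zero_apply]

lemma finrank_socleFiltration_add_finrank_socleFiltration_succ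
    (hlt : Module.finrank F (socleFiltration (sumShift F) (supported F (Set.Iic n)) (k + 1)) <
      Module.finrank F (socleFiltration (sumShift F) (supported F (Set.Iic n)) k)) :
    Module.finrank F (socleFiltration (sumShift F) (supported F (Set.Iic n)) k) +
      Module.finrank F (socleFiltration (sumShift F) (supported F (Set.Iic n)) (k + 1)) + k =
        n.1 + n.2 + 1 := by
  have hreflect := @exists_reflected_degree F _ n k
  simp only [alternating_single_mem_map_iff, not_lt] at hreflect
  obtain ⟨e₁, h₁, h₁', -⟩ := hreflect hlt le_rfl
  obtain ⟨e₂, h₂, -, h₂'⟩ := hreflect (Nat.sub_one_lt_of_lt hlt) (Nat.le_sub_one_of_lt hlt)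
  omega

end SocleOfRectangle

section Twist

variable {R : Type*} [CommRing R] {r s : ℕ}

/-- The operator applying `(1 + S) ^ j` to the row `φ (·, j)`, where `S` is the unit translation.
It conjugates `X + Y + X * Y` to `X + Y`, where `X` and `Y` are the two unit translations. -/
def twist (R : Type*) [CommRing R] : Module.End R (ℕ × ℕ → R) :=
  LinearMap.pi fun x => LinearMap.proj x.1 ∘ₗ ((1 + translate R 1) ^ x.2) ∘ₗ
    LinearMap.funLeft R R fun i => (i, x.2)

lemma twist_apply (φ : ℕ × ℕ → R) (i j : ℕ) :
    twist R φ (i, j) = ((1 + translate R 1) ^ j) (fun i => φ (i, j)) i := rfl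

lemma twist_one_add_translate (φ : ℕ × ℕ → R) :
    twist R ((1 + translate R (1, 0)) ((1 + translate R (0, 1)) φ)) =
      twist R φ + sumShift R (twist R φ) := by
  funext ⟨i, j⟩
  set row : ℕ → ℕ → R := fun j i => φ (i, j)
  have hcomm (l : ℕ) : ((1 + translate R 1) ^ j) ((1 + translate R 1) (row l)) =
      (1 + translate R 1) (((1 + translate R 1) ^ j) (row l)) := by
    rw [← Module.End.mul_apply, ← pow_succ, pow_succ', Module.End.mul_apply]
  calc
    _ = ((1 + translate R 1) ^ j) ((1 + translate R 1) (row j + row (j + 1))) i := rfl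
    _ = (1 + translate R 1) (((1 + translate R 1) ^ j) (row j)) i +
        ((1 + translate R 1) ^ (j + 1)) (row (j + 1)) i := by
      rw [map_add, map_add, hcomm, hcomm, pow_succ', Module.End.mul_apply, Pi.add_apply]
    _ = twist R φ (i, j) + twist R φ (i + 1, j) + twist R φ (i, j + 1) := rfl
    _ = _ := add_assoc _ _ _

lemma row_mem_supported {φ : ℕ × ℕ → R} (hφ : φ ∈ supported R (Set.Iio r ×ˢ Set.Iio s)) (j : ℕ) :
    (fun i => φ (i, j)) ∈ supported R (Set.Iio r) :=
  mem_supported.2 fun _ hi => mem_supported.1 hφ _ fun h => hi h.1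

lemma one_add_translate_mem_supported {M : Type*} [AddCommMonoid M] [Preorder M]
    [CanonicallyOrderedAdd M] {S : Set M} (hS : IsLowerSet S) (a : M) {φ : M → R}
    (hφ : φ ∈ supported R S) : (1 + translate R a) φ ∈ supported R S :=
  add_mem hφ (translate_mem_supported hS a hφ)

lemma one_add_translate_pow_mem_supported {a : ℕ → R} (ha : a ∈ supported R (Set.Iio r)) (j : ℕ) :
    ((1 + translate R 1) ^ j) a ∈ supported R (Set.Iio r) :=
  Submodule.le_comap_pow_of_le_comap _
    (fun _ hb => one_add_translate_mem_supported (isLowerSet_Iio r) 1 hb) j ha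

lemma eq_zero_of_one_add_translate_eq_zero {a : ℕ → R} (ha : a ∈ supported R (Set.Iio r))
    (h : (1 + translate R 1) a = 0) : a = 0 := by
  funext i
  obtain hi | hi := le_total r i
  · exact mem_supported.1 ha i hi.not_gt
  · induction hi using Nat.decreasingInduction with
    | self => exact mem_supported.1 ha r (lt_irrefl r)
    | of_succ i _ ih =>
      have hi : a i + a (i + 1) = 0 := congrFun h i
      rwa [ih, Pi.zero_apply, add_zero] at hi

lemma eq_zero_of_one_add_translate_pow_eq_zero {a : ℕ → R} (ha : a ∈ supported R (Set.Iio r))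
    (j : ℕ) (h : ((1 + translate R 1) ^ j) a = 0) : a = 0 := by
  induction j with
  | zero => exact h
  | succ j ih =>
    rw [pow_succ', Module.End.mul_apply] at h
    exact ih (eq_zero_of_one_add_translate_eq_zero (one_add_translate_pow_mem_supported ha j) h)

lemma twist_mem_supported {φ : ℕ × ℕ → R} (hφ : φ ∈ supported R (Set.Iio r ×ˢ Set.Iio s)) :
    twist R φ ∈ supported R (Set.Iio r ×ˢ Set.Iio s) := by
  refine mem_supported.2 fun ⟨i, j⟩ hij => ?_
  rw [twist_apply]
  by_cases hj : j < s
  · exact mem_supported.1 (one_add_translate_pow_mem_supported (row_mem_supported hφ j) j) i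
      fun hi => hij ⟨hi, hj⟩
  · have hrow : (fun i => φ (i, j)) = 0 :=
      funext fun i => mem_supported.1 hφ (i, j) fun h => hj h.2
    rw [hrow, map_zero, Pi.zero_apply]

lemma eq_zero_of_twist_eq_zero {φ : ℕ × ℕ → R} (hφ : φ ∈ supported R (Set.Iio r ×ˢ Set.Iio s))
    (h : twist R φ = 0) : φ = 0 :=
  funext fun ⟨i, j⟩ => congrFun (eq_zero_of_one_add_translate_pow_eq_zero (row_mem_supported hφ j) j
    (funext fun i => congrFun h (i, j))) i

end Twist

section Kronecker

lemma kronecker_mulVec_apply {R l m n q : Type*} [CommSemiring R] [Fintype m] [Fintype q]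
    (A : Matrix l m R) (B : Matrix n q R) (w : m × q → R) (i : l) (j : n) :
    (A ⊗ₖ B).mulVec w (i, j) = A.mulVec (fun i' => B.mulVec (fun j' => w (i', j')) j) i := by
  simp only [Matrix.mulVec, dotProduct, Matrix.kroneckerMap_apply, Fintype.sum_prod_type, mul_assoc,
    Finset.mul_sum]

variable {F : Type*} [Field F] (r s : ℕ)

lemma prodVal_injective :
    Function.Injective (Prod.map Fin.val Fin.val : Fin r × Fin s → ℕ × ℕ) :=
  Fin.val_injective.prodMap Fin.val_injective

lemma range_prodVal :
    Set.range (Prod.map Fin.val Fin.val : Fin r × Fin s → ℕ × ℕ) = Set.Iio r ×ˢ Set.Iio s := by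
  rw [Set.range_prodMap, Fin.range_val, Fin.range_val]

lemma extendByZero_kronecker_jordanBlock_mulVec (v : Fin r × Fin s → F) :
    Function.ExtendByZero.linearMap F (Prod.map Fin.val Fin.val)
        ((jordanBlock F r ⊗ₖ jordanBlock F s).mulVec v) =
      ((1 + translate F (1, 0)) * (1 + translate F (0, 1)) : Module.End F (ℕ × ℕ → F))
        (Function.ExtendByZero.linearMap F (Prod.map Fin.val Fin.val) v) := by
  apply extendByZero_mulVec (prodVal_injective r s) <;> rw [range_prodVal] <;> intro φ hφ
  · have hlower := (isLowerSet_Iio r).prod (isLowerSet_Iio s)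
    exact one_add_translate_mem_supported hlower _ (one_add_translate_mem_supported hlower _ hφ)
  · rw [mem_supported] at hφ
    funext ⟨i, j⟩
    have hinner (i' : Fin r) : (jordanBlock F s).mulVec (fun j' => φ (i', j')) j =
        φ (i', j) + φ (i', j + 1) :=
      jordanBlock_mulVec (φ := fun j' => φ (i', j')) (hφ _ fun h => lt_irrefl s h.2) j
    have houter := jordanBlock_mulVec (φ := fun i' => φ (i', (j : ℕ)) + φ (i', j + 1))
      (m := r) (by simp [hφ]) i
    rw [kronecker_mulVec_apply]
    simp only [Function.comp_apply, Prod.map_apply, hinner]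
    rw [houter]
    simp

lemma finrank_socleFiltration_kronecker_jordanBlock (k : ℕ) :
    Module.finrank F
        (socleFiltration ((jordanBlock F r ⊗ₖ jordanBlock F s).mulVecLin - 1) ⊤ k) =
      Module.finrank F
        (socleFiltration (sumShift F) (supported F (Set.Iio r ×ˢ Set.Iio s)) k) := by
  set ext : (Fin r × Fin s → F) →ₗ[F] (ℕ × ℕ → F) :=
    Function.ExtendByZero.linearMap F (Prod.map Fin.val Fin.val)
  have hext : Function.Injective ext := extendByZero_injective (prodVal_injective r s)
  have hrange : LinearMap.range ext = supported F (Set.Iio r ×ˢ Set.Iio s) := by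
    rw [range_extendByZero (prodVal_injective r s), range_prodVal]
  have hmem (v) : ext v ∈ supported F (Set.Iio r ×ˢ Set.Iio s) :=
    hrange ▸ LinearMap.mem_range_self ext v
  have htwist : Function.Injective (twist F ∘ₗ ext) := by
    refine (injective_iff_map_eq_zero _).2 fun v hv => hext ?_
    rw [eq_zero_of_twist_eq_zero (hmem v) hv, map_zero]
  have hrange_twist : LinearMap.range (twist F ∘ₗ ext) = LinearMap.range ext := by
    refine Submodule.eq_of_le_of_finrank_eq ?_ ?_
    · rw [hrange]
      rintro _ ⟨v, rfl⟩
      exact twist_mem_supported (hmem v)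
    · rw [LinearMap.finrank_range_of_inj htwist, LinearMap.finrank_range_of_inj hext]
  rw [finrank_socleFiltration_mulVecLin_sub_one htwist (g := sumShift F) (fun v => ?_),
    hrange_twist, hrange]
  rw [LinearMap.comp_apply, LinearMap.comp_apply, extendByZero_kronecker_jordanBlock_mulVec,
    Module.End.mul_apply, twist_one_add_translate]

end Kronecker

lemma card_sigma_fin_subtype {ι : Type*} [Fintype ι] (μ m : ι → ℕ) (k : ℕ) :
    Fintype.card {x : (i : ι) × Fin (m i) // k < μ x.1} = ∑ j with k < μ j, m j := by
  rw [Fintype.card_subtype, Finset.card_filter, Fintype.sum_sigma, Finset.sum_filter]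
  refine Finset.sum_congr rfl fun j _ => ?_
  by_cases h : k < μ j <;> simp [h]

lemma finrank_socleFiltration_of_matSimilar {F : Type*} [Field F] {ι : Type} [Fintype ι]
    [DecidableEq ι] {r s : ℕ} {μ m : ι → ℕ}
    (hsim : MatSimilar F (jordanBlock F r ⊗ₖ jordanBlock F s)
      (jordanBlockDiag F (fun x : (i : ι) × Fin (m i) => μ x.1))) (k : ℕ) :
    Module.finrank F (socleFiltration (sumShift F) (supported F (Set.Iio r ×ˢ Set.Iio s)) k) =
      ∑ j with k < μ j, m j := by
  rw [← finrank_socleFiltration_kronecker_jordanBlock,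
    finrank_socleFiltration_eq_of_matSimilar hsim, finrank_socleFiltration_jordanBlockDiag,
    card_sigma_fin_subtype]

end JordanTensor

open JordanTensor in
theorem stmt_2_general {F : Type*} [Field F] (r s : ℕ) (hr : 0 < r) (hs : 0 < s)
    (t : ℕ) (μ : Fin t → ℕ) (m : Fin t → ℕ)
    (hμ : StrictAnti μ) (hμpos : ∀ i, 0 < μ i) (hm : ∀ i, 1 ≤ m i)
    (hsim : MatSimilar F (jordanBlock F r ⊗ₖ jordanBlock F s)
      (jordanBlockDiag F (fun x : (i : Fin t) × Fin (m i) => μ x.1))) :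
    ∀ i : Fin t, (μ i : ℤ) = (r : ℤ) + s - m i -
      2 * ∑ j ∈ Finset.univ.filter (fun j => j < i), (m j : ℤ) := by
  intro i
  obtain ⟨k, hk⟩ := Nat.exists_eq_add_one.2 (hμpos i)
  have hrect : Set.Iio r ×ˢ Set.Iio s = Set.Iic (r - 1, s - 1) := by
    ext x
    simp [Prod.le_def, Nat.le_sub_one_iff_lt, hr, hs]
  have hcount := hrect ▸ finrank_socleFiltration_of_matSimilar hsim
  have hcount_succ : ∑ j with k + 1 < μ j, m j = ∑ j with j < i, m j := by
    simp only [← hk, hμ.lt_iff_gt]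
  have hcount_k : ∑ j with k < μ j, m j = ∑ j with j < i, m j + m i := by
    simp only [← Nat.add_one_le_iff, ← hk, hμ.le_iff_ge, Finset.filter_ge_eq_Iic,
      Finset.filter_gt_eq_Iio, Finset.sum_Iio_add_eq_sum_Iic]
  have hsum := finrank_socleFiltration_add_finrank_socleFiltration_succ
    (F := F) (n := (r - 1, s - 1)) (k := k) (by have := hm i; rw [hcount, hcount]; omega)
  rw [hcount, hcount, hcount_succ, hcount_k] at hsum
  rw [← Nat.cast_sum]
  omega

/-- Formula `μ_i = r + s − m_i − 2·Σ_{j<i} m_j` for the distinct part sizes. -/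
theorem stmt_2 {F : Type*} [Field F] (p : ℕ) (hp : p.Prime) [CharP F p]
    (r s : ℕ) (hr : 0 < r) (hs : 0 < s)
    (t : ℕ) (μ : Fin t → ℕ) (m : Fin t → ℕ)
    (hμ : StrictAnti μ) (hμpos : ∀ i, 0 < μ i) (hm : ∀ i, 1 ≤ m i)
    (hsim : MatSimilar F (jordanBlock F r ⊗ₖ jordanBlock F s)
      (jordanBlockDiag F (fun x : (i : Fin t) × Fin (m i) => μ x.1))) :
    ∀ i : Fin t, (μ i : ℤ) = (r : ℤ) + s - m i -
      2 * ∑ j ∈ Finset.univ.filter (fun j => j < i), (m j : ℤ) :=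
  stmt_2_general r s hr hs t μ m hμ hμpos hm hsim
end

section
/- Let p be a prime, F a field of characteristic p, and r, s positive integers. Suppose the Kronecker product J_r ⊗ J_s is similar over F to the block-diagonal matrix consisting, for each 1 ≤ i ≤ t, of exactly m_i ≥ 1 diagonal blocks equal to J_{μ_i}, where μ_1 > ⋯ > μ_t > 0. Then m_1 = r + s − μ_1, and m_i = μ_{i−1} − μ_i − m_{i−1} for every 2 ≤ i ≤ t. -/
open Kronecker

/-!
Identify `J_r ⊗ J_s - 1`, up to transposition, with multiplication by `z = x + y` on
`A = F[x, y] / (x ^ r, y ^ s)`. The number of blocks of size greater than `l` is the dimension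
`M_l` of `A / I_l`, where `I_l = {f | z ^ (l + 1) ∣ z ^ l f}`. Since `z ∈ I_l`, this quotient is
generated by `y`, so `M_l` is also the least `j` with `y ^ j ∈ I_l`.

If `M_{l+1} < M_l`, a homogeneous syzygy attached to `y ^ M_{l+1}` is a nonzero element of the
annihilator of `z`. Multiplying it into the socle of `A` by a power of `y` gives
`r + s ≤ M_l + M_{l+1} + (l + 1)`. Hence every block size `d_i` satisfies
`r + s ≤ #{j | d_i < d_j} + #{j | d_i ≤ d_j} + d_i`. There are `M_0 = min r s` blocks, with total
size `r * s`, so summing over all blocks turns each of these inequalities into an equality. The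
recurrence is the difference of the equalities for two consecutive block sizes.
-/

open Finset Module Polynomial

section GeneralAlgebra

theorem one_add_pow_mul {R : Type*} [Semiring R] {a v : R} (hv : a * v = 0) (n : ℕ) :
    (1 + a) ^ n * v = v := by
  induction n with
  | zero => simp
  | succ n ih => rw [pow_succ, mul_assoc, add_mul, one_mul, hv, add_zero, ih]

theorem pow_mul_eq_neg_pow_mul {R : Type*} [CommRing R] {x y v : R} (hv : (x + y) * v = 0)
    (i : ℕ) : x ^ i * v = (-y) ^ i * v := by
  obtain ⟨q, hq⟩ := sub_dvd_pow_sub_pow x (-y) i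
  linear_combination v * hq + q * hv

variable {F : Type*} [Field F]

theorem finrank_quotient_comap_add_finrank {V W : Type*} [AddCommGroup V] [Module F V]
    [AddCommGroup W] [Module F W] [FiniteDimensional F V] (f : V →ₗ[F] W)
    {P : Submodule F W} (hP : P ≤ LinearMap.range f) :
    finrank F (V ⧸ P.comap f) + finrank F P = finrank F (LinearMap.range f) := by
  let P' := P.comap (LinearMap.range f).subtype
  have surjective : Function.Surjective (P'.mkQ ∘ₗ f.rangeRestrict) :=
    P'.mkQ_surjective.comp f.surjective_rangeRestrict
  have ker_eq : LinearMap.ker (P'.mkQ ∘ₗ f.rangeRestrict) = P.comap f := by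
    rw [LinearMap.ker_comp, Submodule.ker_mkQ]
    rfl
  rw [← ker_eq, (LinearMap.quotKerEquivOfSurjective _ surjective).finrank_eq,
    ← (Submodule.comapSubtypeEquivOfLe hP).finrank_eq, P'.finrank_quotient_add_finrank]

variable {A : Type*} [CommRing A] [Algebra F A]

theorem pow_eq_zero_iff_finrank_le {y : A} (hy : IsNilpotent y)
    (hgen : Algebra.adjoin F {y} = ⊤) (j : ℕ) : y ^ j = 0 ↔ finrank F A ≤ j := by
  obtain ⟨k, hk⟩ := hy
  have integral : IsIntegral F y := ⟨X ^ k, monic_X_pow k, by simp [hk]⟩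
  have minpoly_dvd : minpoly F y ∣ X ^ k := minpoly.dvd F y (by simp [hk])
  obtain ⟨d, -, hd⟩ := (dvd_prime_pow prime_X k).mp minpoly_dvd
  have minpoly_eq : minpoly F y = X ^ d :=
    eq_of_monic_of_associated (minpoly.monic integral) (monic_X_pow d) hd
  have finrank_eq : finrank F A = d := by
    rw [(PowerBasis.ofAdjoinEqTop integral hgen).finrank, PowerBasis.ofAdjoinEqTop_dim,
      minpoly_eq, natDegree_X_pow]
  rw [finrank_eq, ← pow_dvd_pow_iff (X_ne_zero (R := F)) not_isUnit_X, ← minpoly_eq,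
    minpoly.dvd_iff, map_pow, aeval_X]

theorem pow_mem_iff_finrank_quotient_le {z y : A} {I : Ideal A} (hz : z ∈ I)
    (hy : IsNilpotent y) (hgen : Algebra.adjoin F {z, y} = ⊤) (j : ℕ) :
    y ^ j ∈ I ↔ finrank F (A ⧸ I) ≤ j := by
  let π := Ideal.Quotient.mkₐ F I
  have hπz : π z = 0 := Ideal.Quotient.eq_zero_iff_mem.mpr hz
  have hgen' : Algebra.adjoin F {π y} = ⊤ := by
    rw [← Algebra.adjoin_insert_zero, ← hπz, ← Set.image_pair, ← AlgHom.map_adjoin, hgen,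
      Algebra.map_top, AlgHom.range_eq_top]
    exact Ideal.Quotient.mkₐ_surjective F I
  rw [← pow_eq_zero_iff_finrank_le (hy.map π) hgen', ← map_pow, Ideal.Quotient.mkₐ_eq_mk,
    Ideal.Quotient.eq_zero_iff_mem]

variable (F) in
/-- The rank of multiplication by `z` on the `F`-algebra `A`. -/
noncomputable def mulRank (z : A) : ℕ :=
  finrank F (LinearMap.range (LinearMap.mulLeft F z))

/-- The ideal of all `f` such that multiplication by `f` maps `z ^ l A` into `z ^ (l + 1) A`.
If `z` is nilpotent, its codimension is the number of Jordan blocks of size greater than `l` of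
multiplication by `z`. -/
def powColon (z : A) (l : ℕ) : Ideal A := (Ideal.span {z ^ (l + 1)}).colon {z ^ l}

theorem mem_powColon {z f : A} {l : ℕ} : f ∈ powColon z l ↔ z ^ (l + 1) ∣ z ^ l * f := by
  rw [powColon, Submodule.mem_colon_singleton, Ideal.mem_span_singleton, smul_eq_mul, mul_comm]

theorem self_mem_powColon (z : A) (l : ℕ) : z ∈ powColon z l :=
  mem_powColon.mpr (pow_succ z l).dvd

theorem finrank_quotient_powColon [FiniteDimensional F A] (z : A) (l : ℕ) :
    finrank F (A ⧸ powColon z l) + mulRank F (z ^ (l + 1)) = mulRank F (z ^ l) := by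
  have range_le : LinearMap.range (LinearMap.mulLeft F (z ^ (l + 1))) ≤
      LinearMap.range (LinearMap.mulLeft F (z ^ l)) := by
    rw [pow_succ, LinearMap.mulLeft_mul]
    exact LinearMap.range_comp_le_range _ _
  have comap_eq : (LinearMap.range (LinearMap.mulLeft F (z ^ (l + 1)))).comap
      (LinearMap.mulLeft F (z ^ l)) = (powColon z l).restrictScalars F := by
    ext f
    rw [Submodule.restrictScalars_mem, mem_powColon]
    exact exists_congr fun u => eq_comm
  rw [mulRank, mulRank, ← finrank_quotient_comap_add_finrank _ range_le, comap_eq]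
  rfl

end GeneralAlgebra

section TruncatedPair

variable {F A : Type*} [Field F] [CommRing A] [Algebra F A]

variable (F) in
/-- `x` and `y` present `A` as the truncated polynomial algebra `F[x, y] / (x ^ r, y ^ s)`: the two
truncation relations hold, the socle generator does not vanish, and the dimension is right. -/
structure IsTruncatedPair (x y : A) (r s : ℕ) : Prop where
  pow_left_eq_zero : x ^ r = 0
  pow_right_eq_zero : y ^ s = 0
  socle_ne_zero : x ^ (r - 1) * y ^ (s - 1) ≠ 0
  finrank_eq : finrank F A = r * s

namespace IsTruncatedPair

variable {x y : A} {r s : ℕ} (h : IsTruncatedPair F x y r s)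
include h

theorem monomial_mul_sum {c : Fin r × Fin s → F} {i : Fin r × Fin s} (hc : ∀ j < i, c j = 0) :
    x ^ (r - 1 - i.1) * y ^ (s - 1 - i.2) * ∑ j, c j • (x ^ (j.1 : ℕ) * y ^ (j.2 : ℕ)) =
      c i • (x ^ (r - 1) * y ^ (s - 1)) := by
  have shift (j : Fin r × Fin s) : x ^ (r - 1 - i.1) * y ^ (s - 1 - i.2) *
      c j • (x ^ (j.1 : ℕ) * y ^ (j.2 : ℕ)) =
      c j • (x ^ (r - 1 - i.1 + j.1) * y ^ (s - 1 - i.2 + j.2)) := by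
    rw [mul_smul_comm, pow_add, pow_add]
    ring_nf
  rw [mul_sum, sum_congr rfl fun j _ => shift j, sum_eq_single i]
  · congr <;> omega
  · intro j _ hji
    by_cases hle : j ≤ i
    · rw [hc j (lt_of_le_of_ne hle hji), zero_smul]
    · rcases not_and_or.mp hle with hlt | hlt
      · rw [pow_eq_zero_of_le (by grind) h.pow_left_eq_zero, zero_mul, smul_zero]
      · rw [pow_eq_zero_of_le (by grind) h.pow_right_eq_zero, mul_zero, smul_zero]
  · simp

theorem linearIndependent_monomial :
    LinearIndependent F fun i : Fin r × Fin s => x ^ (i.1 : ℕ) * y ^ (i.2 : ℕ) := by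
  rw [Fintype.linearIndependent_iff]
  intro c hc i
  induction i using WellFoundedLT.induction with
  | _ i ih =>
    have := h.monomial_mul_sum ih
    rw [hc, mul_zero] at this
    exact (smul_eq_zero_iff_left h.socle_ne_zero).mp this.symm

theorem left_pos : 0 < r := by
  refine Nat.pos_of_ne_zero ?_
  rintro rfl
  exact h.socle_ne_zero (eq_zero_of_zero_eq_one (h.pow_left_eq_zero.symm.trans (pow_zero x)) _)

theorem right_pos : 0 < s := by
  refine Nat.pos_of_ne_zero ?_
  rintro rfl
  exact h.socle_ne_zero (eq_zero_of_zero_eq_one (h.pow_right_eq_zero.symm.trans (pow_zero y)) _)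

theorem finiteDimensional : FiniteDimensional F A :=
  .of_finrank_pos (h.finrank_eq ▸ Nat.mul_pos h.left_pos h.right_pos)

/-- The basis of monomials `x ^ i * y ^ j` with `i < r` and `j < s`. -/
noncomputable def monomialBasis : Basis (Fin r × Fin s) F A :=
  have := h.finiteDimensional
  basisOfLinearIndependentOfCardEqFinrank' _ h.linearIndependent_monomial
    (by simp [h.finrank_eq])

theorem monomialBasis_apply (i : Fin r × Fin s) :
    h.monomialBasis i = x ^ (i.1 : ℕ) * y ^ (i.2 : ℕ) := by
  simp [monomialBasis]

theorem adjoin_eq_top : Algebra.adjoin F {x, y} = ⊤ := by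
  have hx : x ∈ Algebra.adjoin F {x, y} := Algebra.subset_adjoin (by simp)
  have hy : y ∈ Algebra.adjoin F {x, y} := Algebra.subset_adjoin (by simp)
  rw [← Algebra.toSubmodule_eq_top, ← top_le_iff, ← h.monomialBasis.span_eq, Submodule.span_le]
  rintro _ ⟨i, rfl⟩
  rw [monomialBasis_apply]
  exact Subalgebra.mul_mem _ (pow_mem hx _) (pow_mem hy _)

/-- The projection onto the span of the monomials `x ^ i * y ^ j` with `i + j = n`. -/
noncomputable def homogeneousComponent (n : ℕ) : A →ₗ[F] A :=
  h.monomialBasis.constr F fun i => if (i.1 : ℕ) + i.2 = n then h.monomialBasis i else 0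

theorem homogeneousComponent_monomial (n a b : ℕ) :
    h.homogeneousComponent n (x ^ a * y ^ b) = if a + b = n then x ^ a * y ^ b else 0 := by
  by_cases hab : a < r ∧ b < s
  · have := h.monomialBasis.constr_basis F
      (fun i => if (i.1 : ℕ) + i.2 = n then h.monomialBasis i else 0) (⟨a, hab.1⟩, ⟨b, hab.2⟩)
    simpa only [homogeneousComponent, monomialBasis_apply] using this
  · have monomial_eq_zero : x ^ a * y ^ b = 0 := by
      rcases not_and_or.mp hab with ha | hb
      · rw [pow_eq_zero_of_le (not_lt.mp ha) h.pow_left_eq_zero, zero_mul]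
      · rw [pow_eq_zero_of_le (not_lt.mp hb) h.pow_right_eq_zero, mul_zero]
    rw [monomial_eq_zero, map_zero, ite_self]

theorem homogeneousComponent_add_mul_monomial (n a b : ℕ) :
    h.homogeneousComponent n ((x + y) * (x ^ a * y ^ b)) =
      if a + b + 1 = n then (x + y) * (x ^ a * y ^ b) else 0 := by
  have expand : (x + y) * (x ^ a * y ^ b) = x ^ (a + 1) * y ^ b + x ^ a * y ^ (b + 1) := by ring
  rw [expand, map_add, homogeneousComponent_monomial, homogeneousComponent_monomial]
  split_ifs <;> first | omega | simp

theorem homogeneousComponent_succ_mul (n : ℕ) (f : A) :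
    h.homogeneousComponent (n + 1) ((x + y) * f) = (x + y) * h.homogeneousComponent n f := by
  suffices h.homogeneousComponent (n + 1) ∘ₗ LinearMap.mulLeft F (x + y) =
      LinearMap.mulLeft F (x + y) ∘ₗ h.homogeneousComponent n from LinearMap.congr_fun this f
  refine h.monomialBasis.ext fun i => ?_
  simp only [LinearMap.comp_apply, LinearMap.mulLeft_apply, monomialBasis_apply,
    homogeneousComponent_add_mul_monomial, homogeneousComponent_monomial, add_left_inj, mul_ite,
    mul_zero]

theorem homogeneousComponent_zero_mul (f : A) : h.homogeneousComponent 0 ((x + y) * f) = 0 := by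
  suffices h.homogeneousComponent 0 ∘ₗ LinearMap.mulLeft F (x + y) = 0 from
    LinearMap.congr_fun this f
  refine h.monomialBasis.ext fun i => ?_
  simp [monomialBasis_apply, homogeneousComponent_add_mul_monomial]

theorem pow_dvd_homogeneousComponent {f : A} {c n : ℕ} (hf : (x + y) ^ c ∣ f) :
    (x + y) ^ c ∣ h.homogeneousComponent n f := by
  induction c generalizing f n with
  | zero => simp
  | succ c ih =>
    obtain ⟨u, rfl⟩ := hf
    rw [pow_succ', mul_assoc]
    cases n with
    | zero => rw [homogeneousComponent_zero_mul]; exact dvd_zero _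
    | succ n =>
      rw [homogeneousComponent_succ_mul]
      exact mul_dvd_mul_left _ (ih (dvd_mul_right _ _))

theorem homogeneousComponent_add_pow_mul (c n : ℕ) (f : A) :
    h.homogeneousComponent (c + n) ((x + y) ^ c * f) =
      (x + y) ^ c * h.homogeneousComponent n f := by
  induction c with
  | zero => simp
  | succ c ih =>
    rw [pow_succ', mul_assoc, add_right_comm, homogeneousComponent_succ_mul, ih, mul_assoc]

theorem exists_monomial_mul_homogeneousComponent_ne_zero {n : ℕ} {f : A}
    (hf : h.homogeneousComponent n f ≠ 0) :
    ∃ i k, i + k + n + 2 = r + s ∧ x ^ i * y ^ k * h.homogeneousComponent n f ≠ 0 := by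
  let c (j : Fin r × Fin s) : F := if (j.1 : ℕ) + j.2 = n then h.monomialBasis.repr f j else 0
  have component_eq : h.homogeneousComponent n f =
      ∑ j, c j • (x ^ (j.1 : ℕ) * y ^ (j.2 : ℕ)) := by
    simp [c, homogeneousComponent, Basis.constr_apply_fintype, monomialBasis_apply]
  rw [component_eq] at hf ⊢
  obtain ⟨j, -, hj⟩ := exists_ne_zero_of_sum_ne_zero hf
  have hcj : c j ≠ 0 := left_ne_zero_of_smul hj
  have degree_eq : (j.1 : ℕ) + j.2 = n := by
    by_contra hne
    exact hcj (if_neg hne)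
  have lower_eq_zero (k) (hk : k < j) : c k = 0 := by
    rcases Prod.lt_iff.mp hk with hlt | hlt <;> exact if_neg (by grind)
  refine ⟨r - 1 - j.1, s - 1 - j.2, by omega, ?_⟩
  rw [h.monomial_mul_sum lower_eq_zero]
  exact smul_ne_zero hcj h.socle_ne_zero

theorem exists_pow_mul_homogeneousComponent_ne_zero {n : ℕ} {f : A}
    (hf : h.homogeneousComponent n f ≠ 0) (hmul : (x + y) * h.homogeneousComponent n f = 0) :
    ∃ k, k + n + 2 = r + s ∧ y ^ k * h.homogeneousComponent n f ≠ 0 := by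
  obtain ⟨i, k, degree_eq, hne⟩ := h.exists_monomial_mul_homogeneousComponent_ne_zero hf
  refine ⟨i + k, degree_eq, fun hzero => hne ?_⟩
  rw [mul_right_comm, pow_mul_eq_neg_pow_mul hmul, neg_pow]
  linear_combination (-1) ^ i * hzero

theorem adjoin_add_right_eq_top : Algebra.adjoin F {x + y, y} = ⊤ := by
  have hz : x + y ∈ Algebra.adjoin F {x + y, y} := Algebra.subset_adjoin (by simp)
  have hy : y ∈ Algebra.adjoin F {x + y, y} := Algebra.subset_adjoin (by simp)
  rw [← top_le_iff, ← h.adjoin_eq_top, Algebra.adjoin_le_iff, Set.pair_subset_iff]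
  exact ⟨by simpa using Subalgebra.sub_mem _ hz hy, hy⟩

theorem pow_dvd_pow_mul_pow_iff (l j : ℕ) :
    (x + y) ^ (l + 1) ∣ (x + y) ^ l * y ^ j ↔ finrank F (A ⧸ powColon (x + y) l) ≤ j := by
  rw [← mem_powColon, pow_mem_iff_finrank_quotient_le (self_mem_powColon _ _)
    ⟨s, h.pow_right_eq_zero⟩ h.adjoin_add_right_eq_top]

-- Degree `l + j` part of the relation `z * (z ^ l * y ^ j - z ^ (l + 1) * u) = 0`.
theorem exists_homogeneous_syzygy {l j : ℕ}
    (hdvd : (x + y) ^ (l + 2) ∣ (x + y) ^ (l + 1) * y ^ j) :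
    ∃ f w, h.homogeneousComponent (l + j) f = (x + y) ^ l * (y ^ j - (x + y) * w) ∧
      (x + y) * h.homogeneousComponent (l + j) f = 0 := by
  obtain ⟨u, hu⟩ := hdvd
  obtain ⟨w, hw⟩ := h.pow_dvd_homogeneousComponent (n := l + j) (Dvd.intro u rfl :
    (x + y) ^ (l + 1) ∣ (x + y) ^ (l + 1) * u)
  refine ⟨(x + y) ^ l * y ^ j - (x + y) ^ (l + 1) * u, w, ?_, ?_⟩
  · have pure : h.homogeneousComponent (l + j) ((x + y) ^ l * y ^ j) = (x + y) ^ l * y ^ j := by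
      rw [homogeneousComponent_add_pow_mul, ← one_mul (y ^ j), ← pow_zero x,
        homogeneousComponent_monomial, if_pos (zero_add j)]
    rw [map_sub, pure, hw]
    ring
  · rw [← homogeneousComponent_succ_mul, mul_sub, ← mul_assoc, ← pow_succ', hu, ← mul_assoc,
      ← pow_succ', sub_self, map_zero]

theorem add_le_of_pow_dvd {l j : ℕ}
    (hdvd : (x + y) ^ (l + 2) ∣ (x + y) ^ (l + 1) * y ^ j)
    (hndvd : ¬ (x + y) ^ (l + 1) ∣ (x + y) ^ l * y ^ j) :
    r + s ≤ finrank F (A ⧸ powColon (x + y) l) + j + (l + 1) := by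
  obtain ⟨f, w, component_eq, mul_component⟩ := h.exists_homogeneous_syzygy hdvd
  have component_ne_zero : h.homogeneousComponent (l + j) f ≠ 0 := fun hzero =>
    hndvd ⟨w, by linear_combination hzero - component_eq⟩
  obtain ⟨k, degree_eq, hne⟩ :=
    h.exists_pow_mul_homogeneousComponent_ne_zero component_ne_zero mul_component
  -- Otherwise `z ^ l * y ^ k` is a multiple of `z ^ (l + 1)`, so `y ^ k` annihilates the syzygy.
  by_contra! hlt
  obtain ⟨q, hq⟩ := (h.pow_dvd_pow_mul_pow_iff l k).mpr (by omega)
  refine hne ?_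
  calc y ^ k * h.homogeneousComponent (l + j) f
      = (y ^ j - (x + y) * w) * ((x + y) ^ l * y ^ k) := by rw [component_eq]; ring
    _ = (x + y) * h.homogeneousComponent (l + j) f * q := by rw [hq, component_eq]; ring
    _ = 0 := by rw [mul_component, zero_mul]

theorem add_le_of_finrank_quotient_powColon_lt {l : ℕ}
    (hlt : finrank F (A ⧸ powColon (x + y) (l + 1)) < finrank F (A ⧸ powColon (x + y) l)) :
    r + s ≤ finrank F (A ⧸ powColon (x + y) l) + finrank F (A ⧸ powColon (x + y) (l + 1)) +
      (l + 1) :=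
  h.add_le_of_pow_dvd ((h.pow_dvd_pow_mul_pow_iff (l + 1) _).mpr le_rfl)
    ((h.pow_dvd_pow_mul_pow_iff l _).not.mpr hlt.not_ge)

theorem not_add_dvd_pow {j : ℕ} (hr : j < r) (hs : j < s) : ¬ x + y ∣ y ^ j := by
  obtain ⟨a, rfl⟩ := Nat.exists_eq_add_of_lt hr
  obtain ⟨b, rfl⟩ := Nat.exists_eq_add_of_lt hs
  rintro ⟨u, hu⟩
  obtain ⟨q, hq⟩ : ∃ q, (x + y) * ((-x) ^ j + y * q) = y ^ (j + 1) - (-x) ^ (j + 1) := by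
    refine ⟨∑ i ∈ range j, (-x) ^ i * y ^ (j - 1 - i), ?_⟩
    have geom_sum := geom_sum₂_mul (-x) y (j + 1)
    simp only [Nat.add_sub_cancel, geom_sum₂_succ_eq] at geom_sum
    linear_combination -geom_sum
  have mul_eq_zero : x ^ a * y ^ b * ((-x) ^ j + y * q) * y ^ j = 0 := by
    rw [hu]
    linear_combination x ^ a * y ^ b * u * hq - x ^ a * y ^ b * u * neg_pow x (j + 1) +
      x ^ a * u * h.pow_right_eq_zero - (-1) ^ (j + 1) * y ^ b * u * h.pow_left_eq_zero
  have mul_eq_socle : x ^ a * y ^ b * ((-x) ^ j + y * q) * y ^ j =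
      (-1) ^ j * (x ^ (j + a) * y ^ (j + b)) := by
    linear_combination x ^ a * y ^ (b + j) * neg_pow x j + x ^ a * q * h.pow_right_eq_zero
  rw [mul_eq_zero] at mul_eq_socle
  exact h.socle_ne_zero ((isUnit_neg_one.pow j).mul_right_eq_zero.mp mul_eq_socle.symm)

theorem add_dvd_pow_iff (j : ℕ) : x + y ∣ y ^ j ↔ r ≤ j ∨ s ≤ j := by
  constructor
  · intro hdvd
    by_contra! hlt
    exact h.not_add_dvd_pow hlt.1 hlt.2 hdvd
  · rintro (hr | hs)
    · have dvd_sub : y - -x ∣ y ^ j - (-x) ^ j := sub_dvd_pow_sub_pow y (-x) j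
      rwa [neg_pow, pow_eq_zero_of_le hr h.pow_left_eq_zero, mul_zero, sub_zero, sub_neg_eq_add,
        add_comm] at dvd_sub
    · rw [pow_eq_zero_of_le hs h.pow_right_eq_zero]
      exact dvd_zero _

theorem finrank_quotient_powColon_zero :
    finrank F (A ⧸ powColon (x + y) 0) = min r s := by
  refine eq_of_forall_ge_iff fun j => ?_
  rw [← h.pow_dvd_pow_mul_pow_iff, zero_add, pow_one, pow_zero, one_mul, h.add_dvd_pow_iff,
    min_le_iff]

end IsTruncatedPair

end TruncatedPair

section JordanBlocks

theorem jordanBlock_sub_one_pow_apply {R : Type*} [Ring R] (m k : ℕ) (i j : Fin m) :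
    ((jordanBlock R m - 1) ^ k) i j = if (j : ℕ) = i + k then 1 else 0 := by
  have shift (i j : Fin m) : (jordanBlock R m - 1) i j = if (j : ℕ) = i + 1 then 1 else 0 := by
    simp only [jordanBlock, Matrix.sub_apply, Matrix.of_apply, Matrix.one_apply, Fin.ext_iff]
    split_ifs <;> first | omega | simp
  induction k generalizing i with
  | zero => simp [Matrix.one_apply, Fin.ext_iff, eq_comm]
  | succ k ih =>
    simp only [pow_succ', Matrix.mul_apply, shift, ih, ite_mul, one_mul, zero_mul]
    by_cases hi : (i : ℕ) + 1 < m
    · rw [sum_eq_single ⟨i + 1, hi⟩ (fun b _ hb => if_neg fun h => hb (Fin.ext h)) (by simp)]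
      simp [add_assoc, add_comm 1 k]
    · rw [if_neg (by omega)]
      exact sum_eq_zero fun b _ => if_neg (by omega)

variable {F : Type*} [Field F]

theorem jordanBlockDiag_sub_one_pow {ι : Type} [Fintype ι] [DecidableEq ι] (d : ι → ℕ) (k : ℕ) :
    (jordanBlockDiag F d - 1) ^ k =
      Matrix.blockDiagonal' fun i => (jordanBlock F (d i) - 1) ^ k := by
  rw [jordanBlockDiag, ← Matrix.blockDiagonal'_one, ← Matrix.blockDiagonal'_sub,
    ← Matrix.blockDiagonal'_pow]
  rfl

theorem rank_jordanBlockDiag_sub_one_pow {ι : Type} [Fintype ι] [DecidableEq ι] (d : ι → ℕ)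
    (k : ℕ) : ((jordanBlockDiag F d - 1) ^ k).rank = ∑ i, (d i - k) := by
  rw [jordanBlockDiag_sub_one_pow]
  let row (x : (i : ι) × Fin (d i - k)) : (i : ι) × Fin (d i) := ⟨x.1, x.2, by omega⟩
  let col (x : (i : ι) × Fin (d i - k)) : (i : ι) × Fin (d i) := ⟨x.1, x.2 + k, by omega⟩
  have card_eq : Fintype.card ((i : ι) × Fin (d i - k)) = ∑ i, (d i - k) := by simp
  apply le_antisymm
  · classical
    rw [← card_eq]
    refine (Matrix.rank_le_card_of_support_subset _ (univ.image row) ?_).trans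
      card_image_le
    intro x hx
    obtain ⟨⟨j, b⟩, hentry⟩ := Function.ne_iff.mp hx
    obtain ⟨i, a⟩ := x
    obtain rfl : i = j := by
      by_contra hij
      exact hentry (Matrix.blockDiagonal'_apply_ne _ _ _ hij)
    have hb : (b : ℕ) = a + k := by
      by_contra hne
      exact hentry (by simp [Matrix.row, jordanBlock_sub_one_pow_apply, hne])
    exact mem_coe.mpr (mem_image.mpr ⟨⟨i, a, by omega⟩, mem_univ _, rfl⟩)
  · have submatrix_eq : (Matrix.blockDiagonal' fun i => (jordanBlock F (d i) - 1) ^ k).submatrix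
        row col = 1 := by
      ext ⟨i, a⟩ ⟨j, b⟩
      rcases eq_or_ne i j with rfl | hij
      · simp [row, col, jordanBlock_sub_one_pow_apply, Matrix.one_apply, Fin.ext_iff, eq_comm]
      · simp [row, col, hij, Matrix.blockDiagonal'_apply_ne]
    rw [← card_eq, ← Matrix.rank_one (R := F), ← submatrix_eq]
    exact Matrix.rank_submatrix_le _ _ _

theorem card_lt_add_rank_jordanBlockDiag {ι : Type} [Fintype ι] [DecidableEq ι] (d : ι → ℕ)
    (l : ℕ) : #{i | l < d i} + ((jordanBlockDiag F d - 1) ^ (l + 1)).rank =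
      ((jordanBlockDiag F d - 1) ^ l).rank := by
  rw [rank_jordanBlockDiag_sub_one_pow, rank_jordanBlockDiag_sub_one_pow, card_filter,
    ← sum_add_distrib]
  refine sum_congr rfl fun i _ => ?_
  split_ifs <;> omega

namespace MatSimilar

variable {n m : Type*} [Fintype n] [Fintype m] {A : Matrix n n F} {B : Matrix m m F}

theorem sub_one [DecidableEq n] [DecidableEq m] (h : MatSimilar F A B) :
    MatSimilar F (A - 1) (B - 1) := by
  obtain ⟨e, he⟩ := h
  exact ⟨e, fun v => by simp [Matrix.sub_mulVec, he]⟩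

theorem pow [DecidableEq n] [DecidableEq m] (h : MatSimilar F A B) (k : ℕ) :
    MatSimilar F (A ^ k) (B ^ k) := by
  obtain ⟨e, he⟩ := h
  refine ⟨e, fun v => ?_⟩
  induction k with
  | zero => simp
  | succ k ih => rw [pow_succ', pow_succ', ← Matrix.mulVec_mulVec, he, ih, Matrix.mulVec_mulVec]

theorem rank_eq (h : MatSimilar F A B) : A.rank = B.rank := by
  obtain ⟨e, he⟩ := h
  have conj : B.mulVecLin ∘ₗ e.toLinearMap = e.toLinearMap ∘ₗ A.mulVecLin :=
    LinearMap.ext fun v => (he v).symm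
  rw [Matrix.rank, Matrix.rank, ← LinearMap.range_comp_of_range_eq_top _ e.range, conj,
    LinearMap.range_comp]
  exact (e.finrank_map_eq _).symm

end MatSimilar

end JordanBlocks

universe u

theorem exists_powerBasis_gen_pow_eq_zero (F : Type u) [Field F] (n : ℕ) :
    ∃ (A : Type u) (_ : CommRing A) (_ : Algebra F A) (pb : PowerBasis F A),
      pb.dim = n ∧ pb.gen ^ pb.dim = 0 := by
  have dim_eq : (AdjoinRoot.powerBasis' (monic_X_pow (R := F) n)).dim = n := natDegree_X_pow n
  refine ⟨AdjoinRoot (X ^ n : F[X]), inferInstance, inferInstance,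
    AdjoinRoot.powerBasis' (monic_X_pow n), dim_eq, ?_⟩
  rw [dim_eq, AdjoinRoot.powerBasis'_gen, ← AdjoinRoot.mk_X, ← map_pow, AdjoinRoot.mk_self]

section KroneckerModel

open scoped TensorProduct Matrix

variable {F A B : Type*} [Field F] [CommRing A] [Algebra F A] [CommRing B] [Algebra F B]

theorem rank_leftMulMatrix {ι : Type*} [Fintype ι] [DecidableEq ι] (b : Basis ι F A) (a : A) :
    (Algebra.leftMulMatrix b a).rank = mulRank F a := by
  rw [Matrix.rank_eq_finrank_range_toLin _ b b, Algebra.leftMulMatrix_apply, Matrix.toLin_toMatrix]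
  rfl

theorem leftMulMatrix_tmul {ι κ : Type*} [Fintype ι] [DecidableEq ι] [Fintype κ] [DecidableEq κ]
    (b : Basis ι F A) (c : Basis κ F B) (a : A) (a' : B) :
    Algebra.leftMulMatrix (b.tensorProduct c) (a ⊗ₜ a') =
      Algebra.leftMulMatrix b a ⊗ₖ Algebra.leftMulMatrix c a' := by
  simp only [Algebra.leftMulMatrix_apply, ← TensorProduct.toMatrix_map]
  congr 1
  ext
  simp

theorem leftMulMatrix_one_add_gen (pb : PowerBasis F A) (hgen : pb.gen ^ pb.dim = 0) :
    Algebra.leftMulMatrix pb.basis (1 + pb.gen) = (jordanBlock F pb.dim)ᵀ := by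
  ext i j
  rw [Algebra.leftMulMatrix_eq_repr_mul, add_mul, one_mul, map_add, Finsupp.add_apply,
    Basis.repr_self, Finsupp.single_apply, pb.basis_eq_pow, ← pow_succ']
  have repr_succ : pb.basis.repr (pb.gen ^ ((j : ℕ) + 1)) i = if (i : ℕ) = j + 1 then 1 else 0 := by
    by_cases hj : (j : ℕ) + 1 < pb.dim
    · have := pb.basis.repr_self ⟨j + 1, hj⟩
      rw [pb.basis_eq_pow] at this
      rw [this, Finsupp.single_apply]
      simp [Fin.ext_iff, eq_comm]
    · rw [pow_eq_zero_of_le (not_lt.mp hj) hgen, map_zero, Finsupp.zero_apply, if_neg (by omega)]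
  rw [repr_succ]
  simp only [Matrix.transpose_apply, jordanBlock, Matrix.of_apply, Fin.ext_iff]
  split_ifs <;> first | omega | simp

variable (pb : PowerBasis F A) (qb : PowerBasis F B)

-- Twisting `x` by the unit `1 + qb.gen` makes `x + y = (1 + pb.gen) ⊗ₜ (1 + qb.gen) - 1`.
theorem isTruncatedPair_tmul (hpb : pb.gen ^ pb.dim = 0) (hqb : qb.gen ^ qb.dim = 0)
    (hp : 0 < pb.dim) (hq : 0 < qb.dim) :
    IsTruncatedPair F (pb.gen ⊗ₜ[F] (1 + qb.gen)) (1 ⊗ₜ[F] qb.gen) pb.dim qb.dim where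
  pow_left_eq_zero := by rw [Algebra.TensorProduct.tmul_pow, hpb, TensorProduct.zero_tmul]
  pow_right_eq_zero := by rw [Algebra.TensorProduct.tmul_pow, hqb, TensorProduct.tmul_zero]
  socle_ne_zero := by
    have gen_mul : qb.gen * qb.gen ^ (qb.dim - 1) = 0 := by
      rw [← pow_succ', Nat.sub_add_cancel hq, hqb]
    have basis_ne_zero := (pb.basis.tensorProduct qb.basis).ne_zero
      (⟨pb.dim - 1, by omega⟩, ⟨qb.dim - 1, by omega⟩)
    rwa [Algebra.TensorProduct.tmul_pow, Algebra.TensorProduct.tmul_pow,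
      Algebra.TensorProduct.tmul_mul_tmul, one_pow, mul_one, one_add_pow_mul gen_mul,
      ← pb.basis_eq_pow ⟨pb.dim - 1, by omega⟩, ← qb.basis_eq_pow ⟨qb.dim - 1, by omega⟩,
      ← Basis.tensorProduct_apply]
  finrank_eq := by rw [finrank_tensorProduct, pb.finrank, qb.finrank]

theorem rank_kronecker_jordanBlock_sub_one_pow (hpb : pb.gen ^ pb.dim = 0)
    (hqb : qb.gen ^ qb.dim = 0) (l : ℕ) :
    ((jordanBlock F pb.dim ⊗ₖ jordanBlock F qb.dim - 1) ^ l).rank =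
      mulRank F ((pb.gen ⊗ₜ[F] (1 + qb.gen) + 1 ⊗ₜ[F] qb.gen) ^ l) := by
  have add_eq : pb.gen ⊗ₜ[F] (1 + qb.gen) + 1 ⊗ₜ[F] qb.gen =
      (1 + pb.gen) ⊗ₜ[F] (1 + qb.gen) - 1 := by
    rw [Algebra.TensorProduct.one_def, TensorProduct.add_tmul, TensorProduct.tmul_add 1]
    abel
  rw [← rank_leftMulMatrix (pb.basis.tensorProduct qb.basis), add_eq, map_pow, map_sub, map_one,
    leftMulMatrix_tmul, leftMulMatrix_one_add_gen pb hpb, leftMulMatrix_one_add_gen qb hqb,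
    ← Matrix.rank_transpose, Matrix.transpose_pow, Matrix.transpose_sub, Matrix.transpose_one]
  rfl

end KroneckerModel

theorem exists_isTruncatedPair_rank_kronecker (F : Type u) [Field F] {r s : ℕ} (hr : 0 < r)
    (hs : 0 < s) : ∃ (A : Type u) (_ : CommRing A) (_ : Algebra F A) (x y : A),
      IsTruncatedPair F x y r s ∧
      ∀ l, ((jordanBlock F r ⊗ₖ jordanBlock F s - 1) ^ l).rank = mulRank F ((x + y) ^ l) := by
  obtain ⟨A, _, _, pb, rfl, hpb⟩ := exists_powerBasis_gen_pow_eq_zero F r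
  obtain ⟨B, _, _, qb, rfl, hqb⟩ := exists_powerBasis_gen_pow_eq_zero F s
  exact ⟨_, _, _, _, _, isTruncatedPair_tmul pb qb hpb hqb hr hs,
    rank_kronecker_jordanBlock_sub_one_pow pb qb hpb hqb⟩

theorem sum_card_lt_add_card_le {ι α : Type*} [Fintype ι] [LinearOrder α] (d : ι → α) :
    ∑ i, (#{j | d i < d j} + #{j | d i ≤ d j}) = Fintype.card ι ^ 2 := by
  have swap : ∑ i, #{j | d i < d j} = ∑ i, #{j | d j < d i} :=
    sum_card_bipartiteAbove_eq_sum_card_bipartiteBelow fun i j => d i < d j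
  have complement (i : ι) : #{j | d j < d i} + #{j | d i ≤ d j} = Fintype.card ι := by
    simpa only [not_lt, card_univ] using
      card_filter_add_card_filter_not (s := univ) fun j => d j < d i
  rw [sum_add_distrib, swap, ← sum_add_distrib, sum_congr rfl fun i _ => complement i, sum_const,
    card_univ, smul_eq_mul, sq]

section Decomposition

variable {F : Type u} [Field F] {r s : ℕ} {ι : Type} [Fintype ι] [DecidableEq ι] {d : ι → ℕ}

theorem sum_jordanBlock_sizes
    (hsim : MatSimilar F (jordanBlock F r ⊗ₖ jordanBlock F s) (jordanBlockDiag F d)) :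
    ∑ i, d i = r * s := by
  have rank_eq := (hsim.sub_one.pow 0).rank_eq
  rw [pow_zero, Matrix.rank_one, rank_jordanBlockDiag_sub_one_pow] at rank_eq
  simpa using rank_eq.symm

theorem exists_isTruncatedPair_card_lt (hr : 0 < r) (hs : 0 < s)
    (hsim : MatSimilar F (jordanBlock F r ⊗ₖ jordanBlock F s) (jordanBlockDiag F d)) :
    ∃ (A : Type u) (_ : CommRing A) (_ : Algebra F A) (x y : A), IsTruncatedPair F x y r s ∧
      ∀ l, #{i | l < d i} = finrank F (A ⧸ powColon (x + y) l) := by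
  obtain ⟨A, _, _, x, y, h, rank_eq⟩ := exists_isTruncatedPair_rank_kronecker F hr hs
  refine ⟨A, _, _, x, y, h, fun l => ?_⟩
  have := h.finiteDimensional
  refine Nat.add_right_cancel (m := mulRank F ((x + y) ^ (l + 1))) ?_
  rw [finrank_quotient_powColon, ← rank_eq, ← rank_eq, (hsim.sub_one.pow _).rank_eq,
    (hsim.sub_one.pow _).rank_eq, card_lt_add_rank_jordanBlockDiag]

theorem card_lt_add_card_le_add_size (hd : ∀ i, 0 < d i)
    (hsim : MatSimilar F (jordanBlock F r ⊗ₖ jordanBlock F s) (jordanBlockDiag F d)) (i : ι) :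
    #{j | d i < d j} + #{j | d i ≤ d j} + d i = r + s := by
  have sum_sizes := sum_jordanBlock_sizes hsim
  have dim_pos : 0 < r * s :=
    sum_sizes ▸ (hd i).trans_le (single_le_sum_of_canonicallyOrdered (mem_univ i))
  obtain ⟨A, _, _, x, y, h, card_lt⟩ := exists_isTruncatedPair_card_lt
    (Nat.pos_of_mul_pos_right dim_pos) (Nat.pos_of_mul_pos_left dim_pos) hsim
  have card_eq_min : Fintype.card ι = min r s := by
    rw [← h.finrank_quotient_powColon_zero, ← card_lt, filter_true_of_mem fun i _ => hd i,
      card_univ]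
  have lower_bound (i : ι) : r + s ≤ #{j | d i < d j} + #{j | d i ≤ d j} + d i := by
    obtain ⟨l, hl⟩ := Nat.exists_eq_add_one.mpr (hd i)
    have hlt : #{j | l + 1 < d j} < #{j | l < d j} :=
      card_lt_card <| (ssubset_iff_of_subset <| monotone_filter_right _ fun _ _ => by omega).mpr
        ⟨i, by simp [hl], by simp [hl]⟩
    simp only [hl, Nat.succ_le_iff]
    rw [card_lt, card_lt] at hlt ⊢
    have := h.add_le_of_finrank_quotient_powColon_lt hlt
    omega
  have sum_eq : ∑ _i : ι, (r + s) = ∑ i, (#{j | d i < d j} + #{j | d i ≤ d j} + d i) := by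
    rw [sum_const, card_univ, smul_eq_mul, sum_add_distrib (g := d), sum_card_lt_add_card_le,
      sum_sizes, card_eq_min]
    rcases le_total r s with hrs | hrs
    · rw [min_eq_left hrs]; ring
    · rw [min_eq_right hrs]; ring
  exact ((sum_eq_sum_iff_of_le fun i _ => lower_bound i).mp sum_eq i (mem_univ i)).symm

end Decomposition

theorem card_filter_fst_mem {κ : Type*} [Fintype κ] [DecidableEq κ] (m : κ → ℕ) (S : Finset κ) :
    #{x : (k : κ) × Fin (m k) | x.1 ∈ S} = ∑ k ∈ S, m k := by
  have eq_sigma : ({x | x.1 ∈ S} : Finset ((k : κ) × Fin (m k))) = S.sigma fun _ => univ := by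
    ext
    simp
  rw [eq_sigma, card_sigma]
  simp only [card_univ, Fintype.card_fin]

theorem stmt_3_general {F : Type*} [Field F] (r s t : ℕ) (μ : Fin t → ℕ) (m : Fin t → ℕ)
    (hμ : StrictAnti μ) (hμpos : ∀ i, 0 < μ i) (hm : ∀ i, 1 ≤ m i)
    (hsim : MatSimilar F (jordanBlock F r ⊗ₖ jordanBlock F s)
      (jordanBlockDiag F (fun x : (i : Fin t) × Fin (m i) => μ x.1))) :
    (∀ ht : 0 < t, (m ⟨0, ht⟩ : ℤ) = (r : ℤ) + s - μ ⟨0, ht⟩) ∧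
    (∀ i : Fin t, ∀ h : (i : ℕ) + 1 < t,
      (m ⟨(i : ℕ) + 1, h⟩ : ℤ) = (μ i : ℤ) - μ ⟨(i : ℕ) + 1, h⟩ - m i) := by
  have closed_form (i : Fin t) : 2 * ∑ k ∈ Iio i, m k + m i + μ i = r + s := by
    have block_eq := card_lt_add_card_le_add_size
      (d := fun x : (i : Fin t) × Fin (m i) => μ x.1) (fun x => hμpos x.1) hsim ⟨i, 0, hm i⟩
    simp only [hμ.lt_iff_gt, hμ.le_iff_ge, ← mem_Iio, ← mem_Iic, card_filter_fst_mem,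
      ← Iio_insert, sum_insert notMem_Iio_self] at block_eq
    omega
  refine ⟨fun ht => ?_, fun i h => ?_⟩
  · have first := closed_form ⟨0, ht⟩
    have Iio_zero : Iio (⟨0, ht⟩ : Fin t) = ∅ := by ext; simp [Fin.lt_def]
    rw [Iio_zero, sum_empty] at first
    omega
  · have current := closed_form i
    have next := closed_form ⟨i + 1, h⟩
    have Iio_succ : Iio (⟨i + 1, h⟩ : Fin t) = insert i (Iio i) := by ext; simp [Fin.lt_def]
    rw [Iio_succ, sum_insert notMem_Iio_self] at next
    omega

/-- McFall's recurrence: `m₁ = r + s − μ₁` and `m_i = μ_{i−1} − μ_i − m_{i−1}` for `2 ≤ i ≤ t`. -/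
theorem stmt_3 {F : Type*} [Field F] (p : ℕ) (hp : p.Prime) [CharP F p]
    (r s : ℕ) (hr : 0 < r) (hs : 0 < s)
    (t : ℕ) (μ : Fin t → ℕ) (m : Fin t → ℕ)
    (hμ : StrictAnti μ) (hμpos : ∀ i, 0 < μ i) (hm : ∀ i, 1 ≤ m i)
    (hsim : MatSimilar F (jordanBlock F r ⊗ₖ jordanBlock F s)
      (jordanBlockDiag F (fun x : (i : Fin t) × Fin (m i) => μ x.1))) :
    (∀ ht : 0 < t, (m ⟨0, ht⟩ : ℤ) = (r : ℤ) + s - μ ⟨0, ht⟩) ∧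
    (∀ i : Fin t, ∀ h : (i : ℕ) + 1 < t,
      (m ⟨(i : ℕ) + 1, h⟩ : ℤ) = (μ i : ℤ) - μ ⟨(i : ℕ) + 1, h⟩ - m i) :=
  stmt_3_general r s t μ m hμ hμpos hm hsim
end
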